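/- arXiv:2106.04838 — 6 statements merged into one kernel-verified Lean document; each statement's English description precedes it below -/
import Mathlib

section
/- Let g : ℝ³ → ℝ be a C^∞ function with g > 0 everywhere, and let X : ℝ³ → ℝ³ be the vector field X(x,y,λ) = ((λ − 3y²)/g(x,y,λ), −2x/g(x,y,λ), 0) (the Hamiltonian vector field of H(x,y,λ) = x² − y³ + λy with respect to the symplectic form g·dx∧dy in each plane λ = const). Let W ⊆ ℝ³ be an open neighbourhood of the origin and μ = (μ¹, μ², μ³) : W → ℝ³ a C^∞ map such that: (i) μ³(x,y,λ) = λ and H(μ(x,y,λ)) = H(x,y,λ) for all (x,y,λ) ∈ W; (ii) μ(p) = p for every p ∈ W with x = 0 and λ = 3y²; (iii) Dμ_p(X(p)) = X(μ(p)) for all p ∈ W; (iv) (μ²(0,y,λ) − y)(3y² − λ) ≥ 0 whenever (0,y,λ) ∈ W; (v) μ¹(0,y,λ) ≠ 0 whenever (0,y,λ) ∈ W and λ ≠ 3y²; (vi) for every (0,y,λ) ∈ W with λ ≠ 3y² and every t strictly between y and μ²(0,y,λ), one has t³ − λt − y³ + λy > 0. Then there exist an open neighbourhood V ⊆ W of the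 origin and a C^∞ function û : V → ℝ such that: û(p) = û(q) whenever p and q lie in the same connected component of a common level set {r ∈ V : H(r) = H(p), r₃ = p₃}; and for every p ∈ V there is a differentiable curve γ : ℝ → ℝ³ with γ(0) = p, γ'(s) = X(γ(s)) for all s between 0 and û(p), and γ(û(p)) = μ(p). (In other words, μ is the time-1 map of the smooth Hamiltonian vector field û·X.) -/
/-!
Expanding `H(q) - H(p)` over the plane `λ = const` gives
`(x' - x) (x' + x) + (y' - y) (λ - y'² - y' y - y²) = 0` for `p = (x, y, λ)` and
`μ p = (x', y', λ)`, that is, `μ p - p` is a multiple `κ p` of a discrete version of the Hamiltonian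
vector field. Commuting with `X` forces `∂μ¹/∂x = 1` at the origin, so `x' + x` and
`λ - y'² - y' y - y²` are part of a coordinate system there and division by them makes `κ` smooth.

The result `Ψ(k, p)` of a discrete step of size `k` depends smoothly on `(k, p)`, because its
`y`-coordinate solves a quadratic equation, and `∂Ψ/∂k` is a positive multiple of `X` at `Ψ(k, p)`.
So `k ↦ Ψ(k, p)` is an orbit of `X` up to a change of time `dt = τ(k, p) dk`, and
`û p = ∫₀^(κ p) τ(k, p) dk` is a smooth flow time from `p` to `μ p = Ψ(κ p, p)`.

Since `μ` commutes with the flow of `X`, `û` is constant along orbits. A level set consists of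
pieces of orbits and finitely many points with `x = 0`, so `û` takes countably many values on it and
is therefore constant on its connected subsets.
-/

open Set

noncomputable section

/-- The standard parabolic Hamiltonian `H(x,y,λ) = x² − y³ + λy`. -/
def Hpar : ℝ × ℝ × ℝ → ℝ := fun p => p.1 ^ 2 - p.2.1 ^ 3 + p.2.2 * p.2.1

/-- The Hamiltonian vector field of `H` with respect to `g·dx∧dy` in each plane
`λ = const`: `X(x,y,λ) = ((λ − 3y²)/g, −2x/g, 0)`. -/
noncomputable def Xpar (g : ℝ × ℝ × ℝ → ℝ) : ℝ × ℝ × ℝ → ℝ × ℝ × ℝ :=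
  fun p => ((p.2.2 - 3 * p.2.1 ^ 2) / g p, -2 * p.1 / g p, 0)

open Filter MeasureTheory Topology
open scoped ContDiff

/-! ### Integrals depending on a parameter -/

section ParametricIntegral

theorem eventually_forall_mem_and_norm_le {X Y G : Type*} [TopologicalSpace X]
    [TopologicalSpace Y] [NormedAddCommGroup G] {K : Set X} {O : Set (X × Y)} {F : X × Y → G}
    {p : Y} (hK : IsCompact K) (hO : IsOpen O) (hF : ContinuousOn F O)
    (hp : ∀ t ∈ K, (t, p) ∈ O) :
    ∃ M : ℝ, ∀ᶠ q in 𝓝 p, ∀ t ∈ K, (t, q) ∈ O ∧ ‖F (t, q)‖ ≤ M := by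
  have hslice : ContinuousOn (fun t ↦ F (t, p)) K := hF.comp (by fun_prop) hp
  obtain ⟨M, hM⟩ := hK.exists_bound_of_continuousOn hslice
  refine ⟨M + 1, hK.eventually_forall_of_forall_eventually fun t ht ↦ ?_⟩
  have hFt : ContinuousAt (fun z ↦ ‖F z‖) (t, p) := (hF.continuousAt (hO.mem_nhds (hp t ht))).norm
  have hlt : ‖F (t, p)‖ < M + 1 := (hM t ht).trans_lt (lt_add_one M)
  have hnear : ∀ᶠ z in 𝓝 (t, p), z ∈ O ∧ ‖F z‖ ≤ M + 1 :=
    (hO.eventually_mem (hp t ht)).and ((hFt.eventually_lt_const hlt).mono fun _ ↦ le_of_lt)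
  exact (continuous_swap.tendsto (p, t)).eventually hnear

variable {E G : Type*} [NormedAddCommGroup E] [NormedAddCommGroup G] {a b : ℝ}
  {O : Set (ℝ × E)} {U : Set E}

theorem intervalIntegrable_slice {F : ℝ × E → G} {p : E} (hF : ContinuousOn F O)
    (hp : ∀ t ∈ uIcc a b, (t, p) ∈ O) : IntervalIntegrable (fun t ↦ F (t, p)) volume a b :=
  ContinuousOn.intervalIntegrable (hF.comp (by fun_prop) hp)

variable [NormedSpace ℝ G]

theorem continuousOn_parametric_intervalIntegral {F : ℝ × E → G} (hO : IsOpen O)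
    (hF : ContinuousOn F O) (hU : ∀ p ∈ U, ∀ t ∈ uIcc a b, (t, p) ∈ O) :
    ContinuousOn (fun p ↦ ∫ t in a..b, F (t, p)) U := by
  refine fun p hp ↦ ContinuousAt.continuousWithinAt ?_
  obtain ⟨M, hM⟩ := eventually_forall_mem_and_norm_le isCompact_uIcc hO hF (hU p hp)
  refine intervalIntegral.continuousAt_of_dominated_interval (bound := fun _ ↦ M) ?_ ?_
    intervalIntegrable_const (ae_of_all _ fun t ht ↦ ?_)
  · filter_upwards [hM] with q hq
    exact (intervalIntegrable_slice hF fun t ht ↦ (hq t ht).1).aestronglyMeasurable_restrict_uIoc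
  · filter_upwards [hM] with q hq
    exact ae_of_all _ fun t ht ↦ (hq t (uIoc_subset_uIcc ht)).2
  · exact (hF.continuousAt (hO.mem_nhds (hU p hp t (uIoc_subset_uIcc ht)))).comp (by fun_prop)

variable [NormedSpace ℝ E]

theorem hasFDerivAt_parametric_intervalIntegral {F : ℝ × E → G} {p : E} (hO : IsOpen O)
    (hF : ContDiffOn ℝ 1 F O) (hp : ∀ t ∈ uIcc a b, (t, p) ∈ O) :
    HasFDerivAt (fun q ↦ ∫ t in a..b, F (t, q))
      (∫ t in a..b, (fderiv ℝ F (t, p)).comp (.inr ℝ ℝ E)) p := by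
  have hF' : ContinuousOn (fun z ↦ (fderiv ℝ F z).comp (.inr ℝ ℝ E)) O :=
    (hF.continuousOn_fderiv_of_isOpen hO le_rfl).clm_comp continuousOn_const
  obtain ⟨M, hM⟩ := eventually_forall_mem_and_norm_le isCompact_uIcc hO hF' hp
  refine intervalIntegral.hasFDerivAt_integral_of_dominated_of_fderiv_le hM ?_
    (intervalIntegrable_slice hF.continuousOn hp)
    (intervalIntegrable_slice hF' hp).aestronglyMeasurable_restrict_uIoc
    (ae_of_all _ fun t ht q hq ↦ (hq t (uIoc_subset_uIcc ht)).2) intervalIntegrable_const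
    (ae_of_all _ fun t ht q hq ↦ ?_)
  · filter_upwards [hM] with q hq
    have hslice := intervalIntegrable_slice hF.continuousOn fun t ht ↦ (hq t ht).1
    exact hslice.aestronglyMeasurable_restrict_uIoc
  · have hdiff := hF.differentiableOn one_ne_zero |>.differentiableAt
      (hO.mem_nhds (hq t (uIoc_subset_uIcc ht)).1)
    exact hdiff.hasFDerivAt.comp q (hasFDerivAt_prodMk_right t q)

end ParametricIntegral

universe u

theorem contDiffOn_nat_parametric_intervalIntegral {E G : Type u} [NormedAddCommGroup E]
    [NormedSpace ℝ E] [NormedAddCommGroup G] [NormedSpace ℝ G] {a b : ℝ} {O : Set (ℝ × E)}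
    {U : Set E} {F : ℝ × E → G} (n : ℕ) (hO : IsOpen O) (hF : ContDiffOn ℝ n F O)
    (hU : IsOpen U) (hUO : ∀ p ∈ U, ∀ t ∈ uIcc a b, (t, p) ∈ O) :
    ContDiffOn ℝ n (fun p ↦ ∫ t in a..b, F (t, p)) U := by
  -- `G` is replaced by `E →L[ℝ] G` in the induction, which is why `E` and `G` share a universe.
  induction n generalizing G with
  | zero =>
    simp only [Nat.cast_zero, contDiffOn_zero] at hF ⊢
    exact continuousOn_parametric_intervalIntegral hO hF hUO
  | succ n ih =>
    have hderiv : ∀ p ∈ U, HasFDerivAt (fun q ↦ ∫ t in a..b, F (t, q))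
        (∫ t in a..b, (fderiv ℝ F (t, p)).comp (.inr ℝ ℝ E)) p := fun p hp ↦
      hasFDerivAt_parametric_intervalIntegral hO (hF.of_le (by simp)) (hUO p hp)
    push_cast at hF ⊢
    rw [contDiffOn_succ_iff_hasFDerivWithinAt_of_uniqueDiffOn hU.uniqueDiffOn]
    refine ⟨by simp, _, ih (F := fun z ↦ (fderiv ℝ F z).comp (.inr ℝ ℝ E)) ?_,
      fun p hp ↦ (hderiv p hp).hasFDerivWithinAt⟩
    exact (hF.fderiv_of_isOpen hO le_rfl).clm_comp contDiffOn_const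

theorem contDiffOn_parametric_intervalIntegral {E G : Type u} [NormedAddCommGroup E]
    [NormedSpace ℝ E] [NormedAddCommGroup G] [NormedSpace ℝ G] {a b : ℝ} {O : Set (ℝ × E)}
    {U : Set E} {F : ℝ × E → G} {n : ℕ∞} (hO : IsOpen O) (hF : ContDiffOn ℝ n F O)
    (hU : IsOpen U) (hUO : ∀ p ∈ U, ∀ t ∈ uIcc a b, (t, p) ∈ O) :
    ContDiffOn ℝ n (fun p ↦ ∫ t in a..b, F (t, p)) U :=
  contDiffOn_iff_forall_nat_le.2 fun m hm ↦
    contDiffOn_nat_parametric_intervalIntegral m hO (hF.of_le (by exact_mod_cast hm)) hU hUO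

theorem contDiffOn_parametric_intervalIntegral_upper {E G : Type u} [NormedAddCommGroup E]
    [NormedSpace ℝ E] [NormedAddCommGroup G] [NormedSpace ℝ G] {O : Set (ℝ × E)} {U : Set E}
    {F : ℝ × E → G} {κ : E → ℝ} {n : ℕ∞} (hO : IsOpen O) (hF : ContDiffOn ℝ n F O)
    (hU : IsOpen U) (hκ : ContDiffOn ℝ n κ U) (hUO : ∀ p ∈ U, ∀ t ∈ uIcc 0 (κ p), (t, p) ∈ O) :
    ContDiffOn ℝ n (fun p ↦ ∫ t in (0 : ℝ)..κ p, F (t, p)) U := by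
  let σ : ℝ × E → ℝ × E := fun z ↦ (z.1 * κ z.2, z.2)
  have hσ : ContDiffOn ℝ n σ (univ ×ˢ U) :=
    (contDiffOn_fst.mul (hκ.comp contDiffOn_snd fun z hz ↦ hz.2)).prodMk contDiffOn_snd
  have hrescale : ∀ p, κ p • ∫ t in (0 : ℝ)..1, F (σ (t, p)) = ∫ t in (0 : ℝ)..κ p, F (t, p) := by
    intro p
    simpa using intervalIntegral.smul_integral_comp_mul_right (a := 0) (b := 1)
      (fun t ↦ F (t, p)) (κ p)
  simp only [← hrescale]
  refine hκ.smul (contDiffOn_parametric_intervalIntegral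
    (hσ.continuousOn.isOpen_inter_preimage (isOpen_univ.prod hU) hO)
    (hF.comp (hσ.mono inter_subset_left) inter_subset_right) hU fun p hp t ht ↦ ?_)
  refine ⟨⟨mem_univ t, hp⟩, hUO p hp _ ?_⟩
  simpa only [image_mul_const_uIcc, zero_mul, one_mul] using mem_image_of_mem (· * κ p) ht

/-! ### Division of smooth functions by coordinates -/

section Division

variable {F G : Type u} [NormedAddCommGroup F] [NormedSpace ℝ F] [NormedAddCommGroup G]
  [NormedSpace ℝ G]

theorem eq_zero_of_eventually_smul_eq_zero {φ : ℝ → G} {s : ℝ} (hφ : ContinuousAt φ s)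
    (h : ∀ᶠ t in 𝓝 s, t • φ t = 0) : φ s = 0 := by
  have hne : ∀ᶠ t in 𝓝[≠] s, t ≠ 0 := by
    rcases eq_or_ne s 0 with rfl | hs
    · exact self_mem_nhdsWithin
    · exact nhdsWithin_le_nhds (eventually_ne_nhds hs)
  have hzero : φ =ᶠ[𝓝[≠] s] fun _ ↦ 0 := by
    filter_upwards [hne, nhdsWithin_le_nhds h] with t ht hφt
      using (smul_eq_zero.1 hφt).resolve_left ht
  exact ((hφ.eventuallyEq_nhds_iff_eventuallyEq_nhdsNE continuousAt_const).1 hzero).eq_of_nhds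

variable [CompleteSpace G] {n : ℕ∞}

/-- Hadamard's lemma. -/
theorem exists_contDiffOn_eq_fst_smul {U : Set (ℝ × F)} {h : ℝ × F → G} (hU : IsOpen U)
    (hseg : ∀ q ∈ U, ∀ t ∈ Icc (0 : ℝ) 1, (t * q.1, q.2) ∈ U) (hh : ContDiffOn ℝ (n + 1) h U)
    (hzero : ∀ q ∈ U, q.1 = 0 → h q = 0) :
    ∃ k : ℝ × F → G, ContDiffOn ℝ n k U ∧ ∀ q ∈ U, h q = q.1 • k q := by
  let σ : ℝ × ℝ × F → ℝ × F := fun z ↦ (z.1 * z.2.1, z.2.2)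
  let D : ℝ × F → G := fun q ↦ fderiv ℝ h q (1, 0)
  have hD : ContDiffOn ℝ n D U := (hh.fderiv_of_isOpen hU le_rfl).clm_apply contDiffOn_const
  have hσ : ContDiff ℝ n σ := by fun_prop
  have hO : IsOpen (σ ⁻¹' U) := hU.preimage hσ.continuous
  have hUO : ∀ q ∈ U, ∀ t ∈ uIcc (0 : ℝ) 1, (t, q) ∈ σ ⁻¹' U := by
    rw [uIcc_of_le zero_le_one]
    exact hseg
  have hDσ : ContDiffOn ℝ n (D ∘ σ) (σ ⁻¹' U) := hD.comp hσ.contDiffOn fun _ ↦ id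
  refine ⟨fun q ↦ ∫ t in (0 : ℝ)..1, D (σ (t, q)),
    contDiffOn_parametric_intervalIntegral hO hDσ hU hUO, fun q hq ↦ ?_⟩
  have hderiv : ∀ t ∈ uIcc (0 : ℝ) 1, HasDerivAt (fun t ↦ h (σ (t, q))) (q.1 • D (σ (t, q))) t := by
    intro t ht
    have hline : HasDerivAt (fun t ↦ σ (t, q)) (q.1 • (1, 0)) t := by
      simpa using (hasDerivAt_mul_const q.1).prodMk (hasDerivAt_const t q.2)
    have hdiff := (hh.differentiableOn (by simp)).differentiableAt (hU.mem_nhds (hUO q hq t ht))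
    simpa only [D, map_smul, Function.comp_def] using hdiff.hasFDerivAt.comp_hasDerivAt t hline
  have hint := intervalIntegral.integral_eq_sub_of_hasDerivAt hderiv
    ((intervalIntegrable_slice hDσ.continuousOn (hUO q hq)).smul q.1)
  have hstart : h (σ (0, q)) = 0 := hzero _ (hUO q hq 0 left_mem_uIcc) (zero_mul _)
  rw [← intervalIntegral.integral_smul, hint, hstart, sub_zero]
  simp [σ]

/-- Exactness of the Koszul complex of the first two coordinates. -/
theorem exists_contDiffOn_of_smul_add_smul_eq_zero {U : Set (ℝ × ℝ × F)} {a b : ℝ × ℝ × F → G}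
    (hU : IsOpen U) (hseg : ∀ q ∈ U, ∀ t ∈ Icc (0 : ℝ) 1, (t * q.1, q.2) ∈ U)
    (ha : ContinuousOn a U) (hb : ContDiffOn ℝ (n + 1) b U)
    (hab : ∀ q ∈ U, q.1 • a q + q.2.1 • b q = 0) :
    ∃ k : ℝ × ℝ × F → G, ContDiffOn ℝ n k U ∧
      ∀ q ∈ U, a q = -(q.2.1 • k q) ∧ b q = q.1 • k q := by
  have hzero : ∀ q ∈ U, q.1 = 0 → b q = 0 := by
    rintro ⟨_, s, w⟩ hq rfl
    have hline : Continuous fun t : ℝ ↦ ((0 : ℝ), t, w) := by fun_prop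
    refine eq_zero_of_eventually_smul_eq_zero (φ := fun t ↦ b (0, t, w))
      (ContinuousAt.comp (hb.continuousOn.continuousAt (hU.mem_nhds hq)) hline.continuousAt) ?_
    filter_upwards [hline.continuousAt.preimage_mem_nhds (hU.mem_nhds hq)] with t ht
    simpa using hab _ ht
  obtain ⟨k, hk, hbk⟩ := exists_contDiffOn_eq_fst_smul hU hseg hb hzero
  refine ⟨k, hk, fun q hq ↦ ⟨eq_neg_of_add_eq_zero_left ?_, hbk q hq⟩⟩
  have hline : Continuous fun t : ℝ ↦ (t, q.2) := by fun_prop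
  have hak : ContinuousOn (fun q ↦ a q + q.2.1 • k q) U :=
    ha.add (ContinuousOn.smul (by fun_prop) hk.continuousOn)
  refine eq_zero_of_eventually_smul_eq_zero (φ := fun t ↦ a (t, q.2) + q.2.1 • k (t, q.2))
    (s := q.1) (ContinuousAt.comp (hak.continuousAt (hU.mem_nhds hq)) hline.continuousAt) ?_
  filter_upwards [hline.continuousAt.preimage_mem_nhds (hU.mem_nhds hq)] with t ht
  have hsum := hab _ ht
  rw [hbk _ ht] at hsum
  rw [smul_add, smul_comm t, hsum]

end Division

section LocalDivision

theorem exists_openPartialHomeomorph_contDiffOn_symm {E F : Type*} [NormedAddCommGroup E]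
    [NormedSpace ℝ E] [CompleteSpace E] [NormedAddCommGroup F] [NormedSpace ℝ F] {f : E → F}
    {W : Set E} {a : E} {n : ℕ∞ω} (hn : n ≠ 0) (hW : IsOpen W) (ha : a ∈ W)
    (hf : ContDiffOn ℝ n f W) (hinv : (fderiv ℝ f a).IsInvertible) :
    ∃ e : OpenPartialHomeomorph E F, ⇑e = f ∧ a ∈ e.source ∧ e.source ⊆ W ∧
      ContDiffOn ℝ n e.symm e.target := by
  have hfn : ∀ p ∈ W, ContDiffAt ℝ n f p := fun p hp ↦ hf.contDiffAt (hW.mem_nhds hp)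
  have hf' : ContinuousOn (fderiv ℝ f) W :=
    hf.continuousOn_fderiv_of_isOpen hW (ENat.one_le_iff_ne_zero_withTop.2 hn)
  let S : Set E := W ∩ fderiv ℝ f ⁻¹' range ((↑) : (E ≃L[ℝ] F) → E →L[ℝ] F)
  have hS : IsOpen S := hf'.isOpen_inter_preimage hW ContinuousLinearEquiv.isOpen
  obtain ⟨A, hA⟩ := hinv
  have hfa : HasFDerivAt f (A : E →L[ℝ] F) a :=
    hA ▸ ((hfn a ha).differentiableAt hn).hasFDerivAt
  refine ⟨((hfn a ha).toOpenPartialHomeomorph f hfa hn).restrOpen S hS, rfl,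
    ⟨(hfn a ha).mem_toOpenPartialHomeomorph_source hfa hn, ha, A, hA⟩,
    fun p hp ↦ hp.2.1, fun q hq ↦ ContDiffAt.contDiffWithinAt ?_⟩
  obtain ⟨hpW, B, hB⟩ := (OpenPartialHomeomorph.map_target _ hq).2
  have hfp : HasFDerivAt f (B : E →L[ℝ] F) _ := hB ▸ ((hfn _ hpW).differentiableAt hn).hasFDerivAt
  exact OpenPartialHomeomorph.contDiffAt_symm _ hq hfp (hfn _ hpW)

theorem isInvertible_of_injective_of_finiteDimensional {E : Type*} [NormedAddCommGroup E]
    [NormedSpace ℝ E] [FiniteDimensional ℝ E] {A : E →L[ℝ] E} (hA : Function.Injective A) :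
    A.IsInvertible :=
  ⟨(LinearEquiv.ofInjectiveEndo A.toLinearMap hA).toContinuousLinearEquiv, by ext; rfl⟩

theorem exists_local_contDiffOn_of_smul_add_smul_eq_zero {E F G : Type u} [NormedAddCommGroup E]
    [NormedSpace ℝ E] [CompleteSpace E] [NormedAddCommGroup F] [NormedSpace ℝ F]
    [NormedAddCommGroup G] [NormedSpace ℝ G] [CompleteSpace G] {n : ℕ∞} {W : Set E} {p₀ : E}
    {θ : E → ℝ × ℝ × F} {a b : E → G} (hW : IsOpen W) (hp₀ : p₀ ∈ W)
    (hθ : ContDiffOn ℝ (n + 1) θ W) (hθ₀ : θ p₀ = 0) (hinv : (fderiv ℝ θ p₀).IsInvertible)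
    (ha : ContinuousOn a W) (hb : ContDiffOn ℝ (n + 1) b W)
    (hab : ∀ p ∈ W, (θ p).1 • a p + (θ p).2.1 • b p = 0) :
    ∃ U ⊆ W, IsOpen U ∧ p₀ ∈ U ∧ ∃ k : E → G, ContDiffOn ℝ n k U ∧
      ∀ p ∈ U, a p = -((θ p).2.1 • k p) ∧ b p = (θ p).1 • k p := by
  obtain ⟨e, heθ, hp₀e, heW, he⟩ :=
    exists_openPartialHomeomorph_contDiffOn_symm (by simp) hW hp₀ hθ hinv
  have htarget : e.target ∈ 𝓝 (0 : ℝ × ℝ × F) :=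
    e.open_target.mem_nhds (hθ₀ ▸ heθ ▸ e.map_source hp₀e)
  obtain ⟨r, hr, hball⟩ := Metric.mem_nhds_iff.1 htarget
  have hmapsW : MapsTo e.symm (Metric.ball 0 r) W := fun q hq ↦ heW (e.map_target (hball hq))
  have hseg : ∀ q ∈ Metric.ball (0 : ℝ × ℝ × F) r, ∀ t ∈ Icc (0 : ℝ) 1,
      (t * q.1, q.2) ∈ Metric.ball (0 : ℝ × ℝ × F) r := by
    intro q hq t ht
    simp only [mem_ball_zero_iff, Prod.norm_def, sup_lt_iff, norm_mul] at hq ⊢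
    refine ⟨(mul_le_of_le_one_left (norm_nonneg _) ?_).trans_lt hq.1, hq.2⟩
    rw [Real.norm_of_nonneg ht.1]
    exact ht.2
  obtain ⟨k, hk, hkab⟩ := exists_contDiffOn_of_smul_add_smul_eq_zero Metric.isOpen_ball hseg
    (ha.comp (he.continuousOn.mono hball) hmapsW) (hb.comp (he.mono hball) hmapsW) fun q hq ↦ by
      simpa only [Function.comp_apply, ← heθ, e.right_inv (hball hq)] using hab _ (hmapsW hq)
  have hsub : e.source ∩ θ ⁻¹' Metric.ball 0 r ⊆ W := inter_subset_left.trans heW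
  refine ⟨_, hsub, ?_, ⟨hp₀e, ?_⟩, k ∘ θ,
    hk.comp ((hθ.of_le le_self_add).mono hsub) inter_subset_right, fun p hp ↦ ?_⟩
  · exact (hθ.continuousOn.mono heW).isOpen_inter_preimage e.open_source Metric.isOpen_ball
  · simpa only [mem_preimage, hθ₀] using Metric.mem_ball_self hr
  · have hleft : e.symm (θ p) = p := heθ ▸ e.left_inv hp.1
    simpa only [Function.comp_apply, hleft] using hkab (θ p) hp.2

end LocalDivision

theorem fderiv_comp_fderiv_eq_of_eventually_commute {E : Type*} [NormedAddCommGroup E]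
    [NormedSpace ℝ E] {X μ : E → E} {p : E} (hX : DifferentiableAt ℝ X p) (hXp : X p = 0)
    (hμ : ContDiffAt ℝ 2 μ p) (hμp : μ p = p)
    (hcomm : ∀ᶠ q in 𝓝 p, fderiv ℝ μ q (X q) = X (μ q)) :
    (fderiv ℝ μ p).comp (fderiv ℝ X p) = (fderiv ℝ X p).comp (fderiv ℝ μ p) := by
  have hdμ : HasFDerivAt (fderiv ℝ μ) (fderiv ℝ (fderiv ℝ μ) p) p :=
    ((hμ.fderiv_right (m := 1) le_rfl).differentiableAt one_ne_zero).hasFDerivAt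
  have hleft : HasFDerivAt (fun q ↦ fderiv ℝ μ q (X q)) ((fderiv ℝ μ p).comp (fderiv ℝ X p)) p := by
    simpa [hXp] using hdμ.clm_apply hX.hasFDerivAt
  have hright : HasFDerivAt (X ∘ μ) ((fderiv ℝ X p).comp (fderiv ℝ μ p)) p :=
    HasFDerivAt.comp p (hμp.symm ▸ hX.hasFDerivAt)
      (hμ.differentiableAt two_ne_zero).hasFDerivAt
  exact (hleft.congr_of_eventuallyEq (hcomm.mono fun _ ↦ Eq.symm)).unique hright

/-! ### Flow times -/

section Flow

variable {E : Type*} [NormedAddCommGroup E] [NormedSpace ℝ E] {X : E → E}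

theorem eqOn_of_isIntegralCurveOn (hX : LocallyLipschitz X) {γ γ' : ℝ → E} {I : Set ℝ} {s : ℝ}
    (hI : IsOpen I) (hIc : IsPreconnected I) (hγ : IsIntegralCurveOn γ (fun _ ↦ X) I)
    (hγ' : IsIntegralCurveOn γ' (fun _ ↦ X) I) (hs : s ∈ I) (heq : γ s = γ' s) : EqOn γ γ' I := by
  have hlocal : ∀ t ∈ I, γ t = γ' t → γ =ᶠ[𝓝 t] γ' := by
    intro t ht hγt
    obtain ⟨K, N, hN, hLip⟩ := hX (γ t)
    have hstay : ∀ c : ℝ → E, IsIntegralCurveOn c (fun _ ↦ X) I → N ∈ 𝓝 (c t) →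
        ∀ᶠ r in 𝓝 t, HasDerivAt c (X (c r)) r ∧ c r ∈ N := fun c hc hcN ↦
      (hc.isIntegralCurveAt (hI.mem_nhds ht)).and
        ((hc.continuousOn.continuousAt (hI.mem_nhds ht)).eventually_mem hcN)
    exact ODE_solution_unique_of_eventually (v := fun _ ↦ X) (s := fun _ ↦ N)
      (Eventually.of_forall fun _ ↦ hLip) (hstay γ hγ hN) (hstay γ' hγ' (hγt ▸ hN)) hγt
  have hsub : I ⊆ {t | γ =ᶠ[𝓝 t] γ'} := by
    refine hIc.subset_of_closure_inter_subset isOpen_setOfPred_eventually_nhds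
      ⟨s, hs, hlocal s hs heq⟩ fun t ⟨htcl, ht⟩ ↦ hlocal t ht ?_
    refine tendsto_nhds_unique_of_frequently_eq (hγ.continuousOn.continuousAt (hI.mem_nhds ht))
      (hγ'.continuousOn.continuousAt (hI.mem_nhds ht)) ?_
    exact (mem_closure_iff_frequently.1 htcl).mono fun _ ↦ EventuallyEq.eq_of_nhds
  exact fun t ht ↦ (hsub ht).eq_of_nhds

/-- `FlowsTo X t p q` says that the integral curve of the vector field `X` starting at `p` exists up
to time `t` (which may be negative) and is then at `q`. -/
def FlowsTo (X : E → E) (t : ℝ) (p q : E) : Prop :=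
  ∃ (γ : ℝ → E) (I : Set ℝ), IsOpen I ∧ I.OrdConnected ∧ 0 ∈ I ∧ t ∈ I ∧
    IsIntegralCurveOn γ (fun _ ↦ X) I ∧ γ 0 = p ∧ γ t = q

theorem FlowsTo.exists_hasDerivAt {t : ℝ} {p q : E} (h : FlowsTo X t p q) :
    ∃ γ : ℝ → E, γ 0 = p ∧ (∀ s ∈ uIcc 0 t, HasDerivAt γ (X (γ s)) s) ∧ γ t = q := by
  obtain ⟨γ, I, hI, hIc, h0, ht, hγ, hγ0, hγt⟩ := h
  exact ⟨γ, hγ0, fun s hs ↦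
    (hγ s (hIc.uIcc_subset h0 ht hs)).hasDerivAt (hI.mem_nhds (hIc.uIcc_subset h0 ht hs)), hγt⟩

theorem FlowsTo.eq_of_isIntegralCurveOn (hX : LocallyLipschitz X) {γ : ℝ → E} {I : Set ℝ} {s t : ℝ}
    {q : E} (hI : IsOpen I) (hIc : I.OrdConnected) (hγ : IsIntegralCurveOn γ (fun _ ↦ X) I)
    (hs : s ∈ I) (ht : t + s ∈ I) (h : FlowsTo X t (γ s) q) : γ (t + s) = q := by
  obtain ⟨δ, J, hJ, hJc, h0, htJ, hδ, hδ0, hδt⟩ := h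
  have hshift : IsIntegralCurveOn (fun r ↦ γ (r + s)) (fun _ ↦ X) ((· + s) ⁻¹' I) := fun r hr ↦
    (((hγ (r + s) hr).hasDerivAt (hI.mem_nhds hr)).comp_add_const r s).hasDerivWithinAt
  have hIs : OrdConnected ((· + s) ⁻¹' I) := hIc.preimage_mono (add_left_mono (a := s))
  rw [← hδt]
  exact eqOn_of_isIntegralCurveOn hX ((hI.preimage (continuous_add_const s)).inter hJ)
    (hIs.inter hJc).isPreconnected (hshift.mono inter_subset_left)
    (hδ.mono inter_subset_right) ⟨by simpa using hs, h0⟩ (by simp [hδ0]) ⟨ht, htJ⟩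

theorem FlowsTo.eq_of_apply_eq_zero (hX : LocallyLipschitz X) {t : ℝ} {p q : E}
    (h : FlowsTo X t p q) (hq : X q = 0) : p = q := by
  obtain ⟨γ, I, hI, hIc, h0, ht, hγ, hγ0, hγt⟩ := h
  rw [← hγ0]
  exact eqOn_of_isIntegralCurveOn hX hI hIc.isPreconnected hγ
    ((isIntegralCurve_const fun _ ↦ hq).isIntegralCurveOn I) ht hγt h0

theorem fderiv_flowTime_apply_eq_zero (hX : LocallyLipschitz X) {μ : E → E} {u : E → ℝ} {p : E}
    (hμ : DifferentiableAt ℝ μ p) (hu : DifferentiableAt ℝ u p)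
    (hcomm : fderiv ℝ μ p (X p) = X (μ p)) (hflow : ∀ᶠ q in 𝓝 p, FlowsTo X (u q) q (μ q)) :
    fderiv ℝ u p (X p) = 0 := by
  rcases eq_or_ne (X (μ p)) 0 with hXμ | hXμ
  · rw [hflow.self_of_nhds.eq_of_apply_eq_zero hX hXμ, hXμ, map_zero]
  obtain ⟨γ, I, hI, hIc, h0, hup, hγ, hγ0, hγu⟩ := hflow.self_of_nhds
  subst hγ0
  have hγ' : ∀ t ∈ I, HasDerivAt γ (X (γ t)) t := fun t ht ↦ (hγ t ht).hasDerivAt (hI.mem_nhds ht)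
  have huγ : HasDerivAt (fun s ↦ u (γ s) + s) (fderiv ℝ u (γ 0) (X (γ 0)) + 1) 0 :=
    (hu.hasFDerivAt.comp_hasDerivAt 0 (hγ' 0 h0)).add (hasDerivAt_id 0)
  have hμγ : (fun s ↦ μ (γ s)) =ᶠ[𝓝 0] fun s ↦ γ (u (γ s) + s) := by
    filter_upwards [(hγ' 0 h0).continuousAt.eventually hflow, hI.mem_nhds h0,
      huγ.continuousAt.eventually_mem (hI.mem_nhds (by simpa using hup))] with s hs hsI husI
    exact (hs.eq_of_isIntegralCurveOn hX hI hIc hγ hsI husI).symm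
  have hleft : HasDerivAt (fun s ↦ μ (γ s)) (X (μ (γ 0))) 0 :=
    hcomm ▸ hμ.hasFDerivAt.comp_hasDerivAt 0 (hγ' 0 h0)
  have hright : HasDerivAt (fun s ↦ γ (u (γ s) + s))
      ((fderiv ℝ u (γ 0) (X (γ 0)) + 1) • X (μ (γ 0))) 0 := by
    have hout := hγ' _ hup
    rw [hγu] at hout
    exact HasDerivAt.scomp 0 (by simpa using hout) huγ
  have hmul := hleft.unique (hright.congr_of_eventuallyEq hμγ)
  rw [add_smul, one_smul, right_eq_add] at hmul
  exact (smul_eq_zero.1 hmul).resolve_right hXμ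

/-- Rescaling time by the primitive of `τ` turns `c` into an integral curve. -/
theorem flowsTo_integral_of_hasDerivAt_smul {c : ℝ → E} {τ : ℝ → ℝ} {a b k : ℝ}
    (hτ : ContinuousOn τ (Icc a b)) (hτpos : ∀ t ∈ Icc a b, 0 < τ t)
    (hc : ∀ t ∈ Ioo a b, HasDerivAt c (τ t • X (c t)) t) (h0 : 0 ∈ Ioo a b) (hk : k ∈ Ioo a b) :
    FlowsTo X (∫ t in (0 : ℝ)..k, τ t) (c 0) (c k) := by
  have hab : a ≤ b := (h0.1.trans h0.2).le
  let σ : ℝ → ℝ := IccExtend hab (domRestrict (Icc a b) τ)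
  let T : ℝ → ℝ := fun s ↦ ∫ t in (0 : ℝ)..s, σ t
  have hσ : Continuous σ := hτ.domRestrict.Icc_extend'
  have hσpos : ∀ t, 0 < σ t := fun t ↦ hτpos _ (projIcc a b hab t).2
  have hστ : ∀ t ∈ Icc a b, σ t = τ t := fun t ht ↦ IccExtend_of_mem hab _ ht
  have hT : ∀ s, HasStrictDerivAt T (σ s) s := hσ.integral_hasStrictDerivAt 0
  have hTmono : StrictMono T := strictMono_of_hasDerivAt_pos (fun s ↦ (hT s).hasDerivAt) hσpos
  have hTopen : IsOpenMap T := isOpenMap_of_hasStrictDerivAt hT fun s ↦ (hσpos s).ne'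
  have hTcont : Continuous T := continuous_iff_continuousAt.2 fun s ↦ (hT s).hasDerivAt.continuousAt
  have hemb := IsOpenEmbedding.of_continuous_injective_isOpenMap hTcont hTmono.injective hTopen
  let e : OpenPartialHomeomorph ℝ ℝ := hemb.toOpenPartialHomeomorph T
  have hleft : ∀ s, e.symm (T s) = s := fun s ↦ e.left_inv (mem_univ s)
  have hTk : ∫ t in (0 : ℝ)..k, τ t = T k := intervalIntegral.integral_congr fun t ht ↦
    (hστ t (Ioo_subset_Icc_self (ordConnected_Ioo.uIcc_subset h0 hk ht))).symm
  have hT0 : T 0 = 0 := intervalIntegral.integral_same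
  refine ⟨c ∘ e.symm, T '' Ioo a b, hTopen _ isOpen_Ioo,
    (isPreconnected_Ioo.image T hTcont.continuousOn).ordConnected, ⟨0, h0, hT0⟩,
    ⟨k, hk, hTk.symm⟩, ?_, congrArg c (hT0 ▸ hleft 0 :), congrArg c (hTk ▸ hleft k)⟩
  rintro _ ⟨s, hs, rfl⟩
  have hesymm : HasDerivAt e.symm (σ s)⁻¹ (T s) :=
    e.hasDerivAt_symm (mem_image_of_mem _ (mem_univ s)) (hσpos s).ne'
      ((hleft s).symm ▸ (hT s).hasDerivAt)
  have hcs : HasDerivAt c (σ s • X (c s)) (e.symm (T s)) := by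
    rw [hleft, hστ s (Ioo_subset_Icc_self hs)]
    exact hc s hs
  simpa [hleft, (hσpos s).ne'] using (hcs.scomp (T s) hesymm).hasDerivWithinAt

end Flow

theorem eq_of_isPreconnected_of_eventually_eq_off_countable {Y M : Type*} [TopologicalSpace Y]
    [SecondCountableTopology Y] [MetricSpace M] {S C : Set Y} {u : Y → M} (hS : IsPreconnected S)
    (hu : ContinuousOn u S) (hC : (S ∩ C).Countable)
    (hloc : ∀ r ∈ S \ C, ∀ᶠ q in 𝓝[S] r, u q = u r) {p q : Y} (hp : p ∈ S) (hq : q ∈ S) :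
    u p = u q := by
  obtain ⟨t, -, ht, hcover⟩ := TopologicalSpace.countable_cover_nhdsWithin
    (s := S \ C) (f := fun r ↦ {q | u q = u r})
    fun r hr ↦ nhdsWithin_mono r sdiff_subset (hloc r hr)
  have himage : u '' S ⊆ u '' (S ∩ C) ∪ u '' t := by
    rintro _ ⟨r, hr, rfl⟩
    by_cases hrC : r ∈ C
    · exact Or.inl ⟨r, ⟨hr, hrC⟩, rfl⟩
    · obtain ⟨r', hr', hrr'⟩ := mem_iUnion₂.1 (hcover ⟨hr, hrC⟩)
      exact Or.inr ⟨r', hr', hrr'.symm⟩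
  have hcount : (u '' S).Countable := ((hC.image u).union (ht.image u)).mono himage
  exact hcount.isTotallyDisconnected _ subset_rfl (hS.image u hu) ⟨p, hp, rfl⟩ ⟨q, hq, rfl⟩

/-! ### Discrete steps of the parabolic Hamiltonian -/

/-- The Hamiltonian vector field of `Hpar` with respect to the standard form `dx ∧ dy`. -/
def parabolicField (p : ℝ × ℝ × ℝ) : ℝ × ℝ × ℝ := (p.2.2 - 3 * p.2.1 ^ 2, -2 * p.1, 0)

theorem contDiff_parabolicField {n : ℕ∞ω} : ContDiff ℝ n parabolicField := by
  unfold parabolicField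
  fun_prop

theorem Xpar_eq_inv_smul_parabolicField (g : ℝ × ℝ × ℝ → ℝ) :
    Xpar g = fun p ↦ (g p)⁻¹ • parabolicField p := by
  ext p <;> simp [Xpar, parabolicField, div_eq_inv_mul]

theorem Xpar_zero (g : ℝ × ℝ × ℝ → ℝ) : Xpar g 0 = 0 := by
  simp [Xpar]

theorem contDiff_Xpar {g : ℝ × ℝ × ℝ → ℝ} {n : ℕ∞ω} (hg : ContDiff ℝ n g) (hgpos : ∀ p, 0 < g p) :
    ContDiff ℝ n (Xpar g) := by
  rw [Xpar_eq_inv_smul_parabolicField]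
  exact (hg.inv fun p ↦ (hgpos p).ne').smul contDiff_parabolicField

theorem hasFDerivAt_Xpar_zero {g : ℝ × ℝ × ℝ → ℝ} (hg : DifferentiableAt ℝ g 0) (hg0 : g 0 ≠ 0) :
    HasFDerivAt (Xpar g) ((g 0)⁻¹ • fderiv ℝ parabolicField 0) 0 := by
  have hfield := contDiff_parabolicField.differentiable one_ne_zero (0 : ℝ × ℝ × ℝ)
  have hzero : parabolicField 0 = 0 := by simp [parabolicField]
  simpa [Xpar_eq_inv_smul_parabolicField, hzero] using
    (hg.inv hg0).hasFDerivAt.fun_smul hfield.hasFDerivAt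

theorem fderiv_parabolicField_zero_apply (v : ℝ × ℝ × ℝ) :
    fderiv ℝ parabolicField 0 v = (v.2.2, -2 * v.1, 0) := by
  have hline : HasDerivAt (fun t : ℝ ↦ parabolicField (t • v)) (v.2.2, -2 * v.1, 0) 0 := by
    have ht : HasDerivAt (fun t : ℝ ↦ t) 1 0 := hasDerivAt_id 0
    have := ((ht.mul_const v.2.2).sub (((ht.mul_const v.2.1).pow 2).const_mul 3)).prodMk
      (((ht.mul_const v.1).const_mul (-2)).prodMk (hasDerivAt_const 0 (0 : ℝ)))
    simpa [parabolicField] using this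
  have hfield := contDiff_parabolicField.differentiable one_ne_zero (0 : ℝ × ℝ × ℝ)
  rw [← hfield.lineDeriv_eq_fderiv, lineDeriv]
  simpa using hline.deriv

/-- `IsDiscreteStep k p q` says that `q` is reached from `p` by one step of size `k` of the
energy-preserving discretisation of `parabolicField`, which replaces the partial derivatives of
`Hpar` by the difference quotients in
`Hpar q - Hpar p = (q.1 - p.1) (q.1 + p.1) + (q.2.1 - p.2.1) (λ - q.2.1² - q.2.1 p.2.1 - p.2.1²)`,
with `λ` the common third coordinate. -/
structure IsDiscreteStep (k : ℝ) (p q : ℝ × ℝ × ℝ) : Prop where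
  fst_sub : q.1 - p.1 = k * (p.2.2 - q.2.1 ^ 2 - q.2.1 * p.2.1 - p.2.1 ^ 2)
  snd_sub : q.2.1 - p.2.1 = -(k * (q.1 + p.1))
  param_eq : q.2.2 = p.2.2

theorem isDiscreteStep_of_Hpar_eq {p q : ℝ × ℝ × ℝ} (hH : Hpar q = Hpar p)
    (hlam : q.2.2 = p.2.2) (hx : q.1 + p.1 ≠ 0) :
    IsDiscreteStep (-((q.2.1 - p.2.1) / (q.1 + p.1))) p q where
  fst_sub := by
    simp only [Hpar, hlam] at hH
    field_simp
    linear_combination hH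
  snd_sub := by field_simp
  param_eq := hlam

theorem IsDiscreteStep.smul_deriv_eq_parabolicField {c : ℝ → ℝ × ℝ × ℝ} {c' p : ℝ × ℝ × ℝ} {t : ℝ}
    (hc : HasDerivAt c c' t) (hstep : ∀ᶠ s in 𝓝 t, IsDiscreteStep s p (c s)) :
    (1 - t ^ 2 * (2 * (c t).2.1 + p.2.1)) • c' = parabolicField (c t) := by
  have hx : HasDerivAt (fun s ↦ (c s).1) c'.1 t := hc.fst
  have hy : HasDerivAt (fun s ↦ (c s).2.1) c'.2.1 t := hc.snd.fst
  have hlam : HasDerivAt (fun s ↦ (c s).2.2) c'.2.2 t := hc.snd.snd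
  have hid : HasDerivAt (fun s : ℝ ↦ s) 1 t := hasDerivAt_id t
  have hQ := (((hy.pow 2).const_sub p.2.2).sub (hy.mul_const p.2.1)).sub_const (p.2.1 ^ 2)
  have hx' := (hx.sub_const p.1).unique
    ((hid.mul hQ).congr_of_eventuallyEq (hstep.mono fun _ h ↦ h.fst_sub))
  have hy' := (hy.sub_const p.2.1).unique
    ((hid.mul (hx.add_const p.1)).neg.congr_of_eventuallyEq (hstep.mono fun _ h ↦ h.snd_sub))
  have hlam_deriv := hlam.unique
    ((hasDerivAt_const t p.2.2).congr_of_eventuallyEq (hstep.mono fun _ h ↦ h.param_eq))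
  obtain ⟨hfst, hsnd, hparam⟩ := hstep.self_of_nhds
  simp only [Pi.sub_apply, Pi.pow_apply] at hx' hy'
  ext
  · simp only [parabolicField, Prod.smul_fst, smul_eq_mul]
    linear_combination
      hx' - t * (2 * (c t).2.1 + p.2.1) * hy' + (2 * (c t).2.1 + p.2.1) * hsnd - hparam
  · simp only [parabolicField, Prod.smul_fst, Prod.smul_snd, smul_eq_mul]
    linear_combination hy' - t * hx' + hfst
  · simp [parabolicField, hlam_deriv]

/-- Eliminating `q.1` from the equations of a discrete step of size `k` from `p` leaves the equation
`k² y² - (1 - k² p.2.1) y + stepConst (k, p) = 0` for `y = q.2.1`. -/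
def stepConst (z : ℝ × ℝ × ℝ × ℝ) : ℝ :=
  z.2.2.1 - 2 * z.1 * z.2.1 - z.1 ^ 2 * z.2.2.2 + z.1 ^ 2 * z.2.2.1 ^ 2

/-- The discriminant of the quadratic equation described at `stepConst`. -/
def stepDisc (z : ℝ × ℝ × ℝ × ℝ) : ℝ :=
  (1 - z.1 ^ 2 * z.2.2.1) ^ 2 - 4 * z.1 ^ 2 * stepConst z

/-- The pairs `(k, p)` for which `discreteStep (k, p)` is a smooth solution of the equations of a
discrete step. -/
def stepDomain : Set (ℝ × ℝ × ℝ × ℝ) := {z | 0 < stepDisc z ∧ 0 < 1 - z.1 ^ 2 * z.2.2.1}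

/-- The second coordinate of `discreteStep`: the root of the quadratic equation described at
`stepConst` that stays bounded as the step size tends to `0`, with rationalised numerator. -/
def discreteStepSnd (z : ℝ × ℝ × ℝ × ℝ) : ℝ :=
  2 * stepConst z / (1 - z.1 ^ 2 * z.2.2.1 + √(stepDisc z))

/-- The result of the discrete step of size `k` from `p`, as a function of `(k, p)`. -/
def discreteStep (z : ℝ × ℝ × ℝ × ℝ) : ℝ × ℝ × ℝ :=
  (z.2.1 + z.1 * (z.2.2.2 - discreteStepSnd z ^ 2 - discreteStepSnd z * z.2.2.1 - z.2.2.1 ^ 2),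
    discreteStepSnd z, z.2.2.2)

theorem contDiff_stepConst {n : ℕ∞ω} : ContDiff ℝ n stepConst := by
  unfold stepConst
  fun_prop

theorem contDiff_stepDisc {n : ℕ∞ω} : ContDiff ℝ n stepDisc := by
  have := contDiff_stepConst (n := n)
  unfold stepDisc
  fun_prop

theorem isOpen_stepDomain : IsOpen stepDomain := by
  have hlin : Continuous fun z : ℝ × ℝ × ℝ × ℝ ↦ 1 - z.1 ^ 2 * z.2.2.1 := by fun_prop
  exact (isOpen_Ioi.preimage (contDiff_stepDisc (n := 0)).continuous).inter
    (isOpen_Ioi.preimage hlin)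

theorem contDiffOn_sqrt_stepDisc {n : ℕ∞ω} : ContDiffOn ℝ n (fun z ↦ √(stepDisc z)) stepDomain :=
  contDiff_stepDisc.contDiffOn.sqrt fun _ hz ↦ hz.1.ne'

theorem contDiffOn_discreteStep {n : ℕ∞ω} : ContDiffOn ℝ n discreteStep stepDomain := by
  have hsnd : ContDiffOn ℝ n discreteStepSnd stepDomain := by
    refine (contDiffOn_const.mul contDiff_stepConst.contDiffOn).div
      (ContDiffOn.add (by fun_prop) contDiffOn_sqrt_stepDisc) fun z hz ↦ ?_
    exact (add_pos_of_pos_of_nonneg hz.2 (Real.sqrt_nonneg _)).ne'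
  unfold discreteStep
  fun_prop

theorem sqrt_stepDisc {z : ℝ × ℝ × ℝ × ℝ} (hz : z ∈ stepDomain) :
    √(stepDisc z) = 1 - z.1 ^ 2 * (2 * discreteStepSnd z + z.2.2.1) := by
  have hden : 0 < 1 - z.1 ^ 2 * z.2.2.1 + √(stepDisc z) :=
    add_pos_of_pos_of_nonneg hz.2 (Real.sqrt_nonneg _)
  have hsq := Real.sq_sqrt hz.1.le
  have hy : discreteStepSnd z * (1 - z.1 ^ 2 * z.2.2.1 + √(stepDisc z)) = 2 * stepConst z :=
    div_mul_cancel₀ _ hden.ne'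
  have hdisc : stepDisc z = (1 - z.1 ^ 2 * z.2.2.1) ^ 2 - 4 * z.1 ^ 2 * stepConst z := rfl
  refine mul_right_cancel₀ hden.ne' ?_
  linear_combination hsq + hdisc + 2 * z.1 ^ 2 * hy

theorem isDiscreteStep_discreteStep {z : ℝ × ℝ × ℝ × ℝ} (hz : z ∈ stepDomain) :
    IsDiscreteStep z.1 z.2 (discreteStep z) where
  fst_sub := by simp [discreteStep]
  snd_sub := by
    have hden : 1 - z.1 ^ 2 * z.2.2.1 + √(stepDisc z) ≠ 0 :=
      (add_pos_of_pos_of_nonneg hz.2 (Real.sqrt_nonneg _)).ne'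
    have hy : discreteStepSnd z * (1 - z.1 ^ 2 * z.2.2.1 + √(stepDisc z)) = 2 * stepConst z :=
      div_mul_cancel₀ _ hden
    rw [sqrt_stepDisc hz, stepConst] at hy
    simp only [discreteStep]
    linear_combination hy / 2
  param_eq := rfl

theorem IsDiscreteStep.stepConst_eq {k : ℝ} {p q : ℝ × ℝ × ℝ} (h : IsDiscreteStep k p q) :
    stepConst (k, p) = q.2.1 * (1 - k ^ 2 * p.2.1 - k ^ 2 * q.2.1) := by
  simp only [stepConst]
  linear_combination -h.snd_sub + k * h.fst_sub

theorem IsDiscreteStep.stepDisc_eq {k : ℝ} {p q : ℝ × ℝ × ℝ} (h : IsDiscreteStep k p q) :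
    stepDisc (k, p) = (1 - k ^ 2 * (2 * q.2.1 + p.2.1)) ^ 2 := by
  have hconst := h.stepConst_eq
  rw [stepDisc]
  linear_combination -4 * k ^ 2 * hconst

theorem IsDiscreteStep.eq_discreteStep {k : ℝ} {p q : ℝ × ℝ × ℝ} (h : IsDiscreteStep k p q)
    (hp : 0 < 1 - k ^ 2 * p.2.1) (hpq : 0 < 1 - k ^ 2 * (2 * q.2.1 + p.2.1)) :
    q = discreteStep (k, p) := by
  have hy : q.2.1 = discreteStepSnd (k, p) := by
    have hsqrt : √(stepDisc (k, p)) = 1 - k ^ 2 * (2 * q.2.1 + p.2.1) := by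
      rw [h.stepDisc_eq, Real.sqrt_sq hpq.le]
    have hden : 1 - k ^ 2 * p.2.1 + √(stepDisc (k, p)) ≠ 0 :=
      (add_pos_of_pos_of_nonneg hp (Real.sqrt_nonneg _)).ne'
    rw [discreteStepSnd, eq_div_iff hden, h.stepConst_eq, hsqrt]
    ring
  refine Prod.ext ?_ (Prod.ext hy h.param_eq)
  simp only [discreteStep, ← hy]
  linear_combination h.fst_sub

theorem zero_mem_stepDomain (p : ℝ × ℝ × ℝ) : (0, p) ∈ stepDomain := by
  simp [stepDomain, stepDisc]

theorem discreteStep_zero (p : ℝ × ℝ × ℝ) : discreteStep (0, p) = p := by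
  obtain ⟨hfst, hsnd, hparam⟩ := isDiscreteStep_discreteStep (zero_mem_stepDomain p)
  simp only [zero_mul, neg_zero, sub_eq_zero] at hfst hsnd
  exact Prod.ext hfst (Prod.ext hsnd hparam)

theorem hasDerivAt_discreteStep {k : ℝ} {p : ℝ × ℝ × ℝ} (hz : (k, p) ∈ stepDomain) :
    HasDerivAt (fun t ↦ discreteStep (t, p))
      ((√(stepDisc (k, p)))⁻¹ • parabolicField (discreteStep (k, p))) k := by
  have hnear : ∀ᶠ t in 𝓝 k, (t, p) ∈ stepDomain :=
    (Continuous.prodMk_left p).continuousAt.eventually_mem (isOpen_stepDomain.mem_nhds hz)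
  have hstep : DifferentiableAt ℝ discreteStep (k, p) :=
    (contDiffOn_discreteStep.contDiffAt (isOpen_stepDomain.mem_nhds hz)).differentiableAt
      one_ne_zero
  have hdiff : DifferentiableAt ℝ (fun t ↦ discreteStep (t, p)) k :=
    hstep.fun_comp' k (by fun_prop)
  have hderiv := IsDiscreteStep.smul_deriv_eq_parabolicField hdiff.hasDerivAt
    (hnear.mono fun t ht ↦ isDiscreteStep_discreteStep ht)
  have hsqrt : √(stepDisc (k, p)) = 1 - k ^ 2 * (2 * (discreteStep (k, p)).2.1 + p.2.1) :=
    sqrt_stepDisc hz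
  rw [← hderiv, ← hsqrt, inv_smul_smul₀ (Real.sqrt_pos.2 hz.1).ne']
  exact hdiff.hasDerivAt

/-- The rate at which the time of the flow of `Xpar g` passes along the curve
`k ↦ discreteStep (k, p)`, as a function of `(k, p)`. -/
def stepTime (g : ℝ × ℝ × ℝ → ℝ) (z : ℝ × ℝ × ℝ × ℝ) : ℝ := g (discreteStep z) / √(stepDisc z)

theorem contDiffOn_stepTime {g : ℝ × ℝ × ℝ → ℝ} {n : ℕ∞ω} (hg : ContDiff ℝ n g) :
    ContDiffOn ℝ n (stepTime g) stepDomain :=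
  (hg.comp_contDiffOn contDiffOn_discreteStep).div contDiffOn_sqrt_stepDisc
    fun _ hz ↦ (Real.sqrt_pos.2 hz.1).ne'

theorem flowsTo_discreteStep {g : ℝ × ℝ × ℝ → ℝ} (hg : Continuous g) (hgpos : ∀ p, 0 < g p)
    {a b k : ℝ} {p : ℝ × ℝ × ℝ} (hdom : ∀ t ∈ Icc a b, (t, p) ∈ stepDomain) (h0 : 0 ∈ Ioo a b)
    (hk : k ∈ Ioo a b) :
    FlowsTo (Xpar g) (∫ t in (0 : ℝ)..k, stepTime g (t, p)) p (discreteStep (k, p)) := by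
  have hcont : ContinuousOn (fun t ↦ stepTime g (t, p)) (Icc a b) :=
    (contDiffOn_stepTime (contDiff_zero.2 hg)).continuousOn.comp
      (Continuous.prodMk_left p).continuousOn hdom
  have hpos : ∀ t ∈ Icc a b, 0 < stepTime g (t, p) := fun t ht ↦
    div_pos (hgpos _) (Real.sqrt_pos.2 (hdom t ht).1)
  have hderiv : ∀ t ∈ Ioo a b, HasDerivAt (fun t ↦ discreteStep (t, p))
      (stepTime g (t, p) • Xpar g (discreteStep (t, p))) t := fun t ht ↦ by
    convert hasDerivAt_discreteStep (hdom t (Ioo_subset_Icc_self ht)) using 1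
    rw [Xpar_eq_inv_smul_parabolicField, smul_smul, stepTime, div_mul_eq_mul_div,
      mul_inv_cancel₀ (hgpos _).ne', one_div]
  simpa only [discreteStep_zero] using
    flowsTo_integral_of_hasDerivAt_smul hcont hpos hderiv h0 hk

theorem eventually_forall_Icc_mem_stepDomain (a b : ℝ) :
    ∀ᶠ p in 𝓝 (0 : ℝ × ℝ × ℝ), ∀ t ∈ Icc a b, (t, p) ∈ stepDomain := by
  have hzero : ∀ t, (t, (0 : ℝ × ℝ × ℝ)) ∈ stepDomain := fun t ↦ by
    simp [stepDomain, stepDisc, stepConst]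
  refine isCompact_Icc.eventually_forall_of_forall_eventually fun t _ ↦ ?_
  exact continuous_swap.continuousAt.eventually_mem (isOpen_stepDomain.mem_nhds (hzero t))

theorem eventually_eq_discreteStep_of_Hpar_eq {p : ℝ × ℝ × ℝ} (hp : p.1 ≠ 0) {ε : ℝ} (hε : 0 < ε) :
    ∀ᶠ q in 𝓝 p, Hpar q = Hpar p → q.2.2 = p.2.2 →
      ∃ k ∈ Ioo (-ε) ε, q = discreteStep (k, p) := by
  let k : ℝ × ℝ × ℝ → ℝ := fun q ↦ -((q.2.1 - p.2.1) / (q.1 + p.1))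
  have hpp : p.1 + p.1 ≠ 0 := by simpa using hp
  have hk0 : k p = 0 := by simp [k]
  have hk : ContinuousAt k p := by fun_prop (disch := exact hpp)
  have hdom₁ : ContinuousAt (fun q ↦ 1 - k q ^ 2 * p.2.1) p := by fun_prop
  have hdom₂ : ContinuousAt (fun q ↦ 1 - k q ^ 2 * (2 * q.2.1 + p.2.1)) p := by fun_prop
  have hsum : ContinuousAt (fun q : ℝ × ℝ × ℝ ↦ q.1 + p.1) p := by fun_prop
  filter_upwards [hsum.eventually_ne hpp,
    hk.eventually_mem (isOpen_Ioo.mem_nhds (show k p ∈ Ioo (-ε) ε by simpa [hk0] using hε)),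
    hdom₁.eventually_mem (isOpen_Ioi.mem_nhds (show _ ∈ Ioi 0 by simp [hk0])),
    hdom₂.eventually_mem (isOpen_Ioi.mem_nhds (show _ ∈ Ioi 0 by simp [hk0]))]
    with q hq hqk hq₁ hq₂ hH hlam
  exact ⟨k q, hqk, (isDiscreteStep_of_Hpar_eq hH hlam hq).eq_discreteStep hq₁ hq₂⟩

theorem eventually_eq_of_fderiv_parabolicField_eq_zero {V : Set (ℝ × ℝ × ℝ)} {u : ℝ × ℝ × ℝ → ℝ}
    (hV : IsOpen V) (hu : DifferentiableOn ℝ u V)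
    (hfirst : ∀ p ∈ V, fderiv ℝ u p (parabolicField p) = 0) {p : ℝ × ℝ × ℝ} (hpV : p ∈ V)
    (hp : p.1 ≠ 0) : ∀ᶠ q in 𝓝 p, Hpar q = Hpar p → q.2.2 = p.2.2 → u q = u p := by
  have hcont : ContinuousAt (fun t ↦ discreteStep (t, p)) 0 :=
    (hasDerivAt_discreteStep (zero_mem_stepDomain p)).continuousAt
  have hnear : ∀ᶠ t in 𝓝 (0 : ℝ), (t, p) ∈ stepDomain ∧ discreteStep (t, p) ∈ V :=
    ((Continuous.prodMk_left p).continuousAt.eventually_mem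
      (isOpen_stepDomain.mem_nhds (zero_mem_stepDomain p))).and
      (hcont.eventually_mem (hV.mem_nhds (by simpa only [discreteStep_zero] using hpV)))
  obtain ⟨ε, hε, hball⟩ := Metric.eventually_nhds_iff_ball.1 hnear
  simp only [Real.ball_eq_Ioo, zero_sub, zero_add] at hball
  have hderiv : ∀ t ∈ Ioo (-ε) ε, HasDerivAt (fun s ↦ u (discreteStep (s, p))) 0 t := fun t ht ↦ by
    obtain ⟨hdom, htV⟩ := hball t ht
    have h := ((hu.differentiableAt (hV.mem_nhds htV)).hasFDerivAt).comp_hasDerivAt t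
      (hasDerivAt_discreteStep hdom)
    rwa [map_smul, hfirst _ htV, smul_zero] at h
  filter_upwards [eventually_eq_discreteStep_of_Hpar_eq hp hε] with q hq hH hlam
  obtain ⟨k, hk, rfl⟩ := hq hH hlam
  have hconst := isOpen_Ioo.is_const_of_deriv_eq_zero isPreconnected_Ioo
    (fun t ht ↦ (hderiv t ht).differentiableAt.differentiableWithinAt)
    (fun t ht ↦ (hderiv t ht).deriv) hk (show (0 : ℝ) ∈ Ioo (-ε) ε by simpa using hε)
  simpa only [discreteStep_zero] using hconst

theorem finite_fst_eq_zero_Hpar_eq (h l : ℝ) :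
    {r : ℝ × ℝ × ℝ | r.1 = 0 ∧ Hpar r = h ∧ r.2.2 = l}.Finite := by
  let P : Polynomial ℝ := .X ^ 3 - .C l * .X + .C h
  have hP : P ≠ 0 := by
    have hdeg : P.natDegree = 3 := by
      simp only [P]
      compute_degree!
    exact Polynomial.ne_zero_of_natDegree_gt (n := 0) (by simp [hdeg])
  refine ((Polynomial.finite_setOfPred_isRoot hP).image fun y ↦ ((0 : ℝ), y, l)).subset ?_
  rintro ⟨x, y, lam⟩ ⟨hx, hH, hlam⟩
  simp only [Hpar] at hx hH hlam
  subst hx hlam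
  refine ⟨y, ?_, rfl⟩
  simp only [mem_ofPred_eq, Polynomial.IsRoot, P, Polynomial.eval_add, Polynomial.eval_sub,
    Polynomial.eval_mul, Polynomial.eval_pow, Polynomial.eval_X, Polynomial.eval_C]
  linear_combination -hH

theorem eq_of_fderiv_parabolicField_eq_zero {V S : Set (ℝ × ℝ × ℝ)} {u : ℝ × ℝ × ℝ → ℝ}
    (hV : IsOpen V) (hu : DifferentiableOn ℝ u V)
    (hfirst : ∀ p ∈ V, fderiv ℝ u p (parabolicField p) = 0) (hS : IsPreconnected S) (hSV : S ⊆ V)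
    {h l : ℝ} (hlevel : ∀ r ∈ S, Hpar r = h ∧ r.2.2 = l) {p q : ℝ × ℝ × ℝ} (hp : p ∈ S)
    (hq : q ∈ S) : u p = u q := by
  refine eq_of_isPreconnected_of_eventually_eq_off_countable (C := {r | r.1 = 0}) hS
    (hu.continuousOn.mono hSV) ?_ ?_ hp hq
  · exact ((finite_fst_eq_zero_Hpar_eq h l).subset
      fun r hr ↦ ⟨hr.2, hlevel r hr.1⟩).countable
  · rintro r ⟨hrS, hr⟩
    filter_upwards [self_mem_nhdsWithin, mem_nhdsWithin_of_mem_nhds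
      (eventually_eq_of_fderiv_parabolicField_eq_zero hV hu hfirst (hSV hrS) hr)] with q hqS hq
    exact hq ((hlevel q hqS).1.trans (hlevel r hrS).1.symm)
      ((hlevel q hqS).2.trans (hlevel r hrS).2.symm)

/-! ### Return maps -/

section ReturnMap

variable {g : ℝ × ℝ × ℝ → ℝ} {W : Set (ℝ × ℝ × ℝ)} {μ : ℝ × ℝ × ℝ → ℝ × ℝ × ℝ}

theorem map_zero_of_commute (hgpos : ∀ p, 0 < g p) (hlam : (μ 0).2.2 = 0)
    (hcomm : fderiv ℝ μ 0 (Xpar g 0) = Xpar g (μ 0)) : μ 0 = 0 := by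
  rw [Xpar_zero, map_zero, Xpar_eq_inv_smul_parabolicField] at hcomm
  have hfield : parabolicField (μ 0) = 0 :=
    (smul_eq_zero.1 hcomm.symm).resolve_left (inv_ne_zero (hgpos _).ne')
  simp only [parabolicField, hlam, Prod.mk_eq_zero] at hfield
  refine Prod.ext (by simpa using hfield.2.1) (Prod.ext ?_ hlam)
  simpa using hfield.1

/-- The linearisations of `μ` and `Xpar g` at the origin commute, and the latter maps `∂/∂λ` to a
multiple of `∂/∂x`. -/
theorem fderiv_apply_fst_of_commute (hg : DifferentiableAt ℝ g 0) (hg0 : g 0 ≠ 0)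
    (hμ : ContDiffAt ℝ 2 μ 0) (hμ0 : μ 0 = 0) (hlam : ∀ v, (fderiv ℝ μ 0 v).2.2 = v.2.2)
    (hcomm : ∀ᶠ p in 𝓝 0, fderiv ℝ μ p (Xpar g p) = Xpar g (μ p)) :
    (fderiv ℝ μ 0 (1, 0, 0)).1 = 1 := by
  have hX := hasFDerivAt_Xpar_zero hg hg0
  have hlin := fderiv_comp_fderiv_eq_of_eventually_commute hX.differentiableAt (Xpar_zero g) hμ hμ0
    hcomm
  have happly := DFunLike.congr_fun hlin (0, 0, 1)
  simp only [hX.fderiv, ContinuousLinearMap.comp_apply, smul_apply,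
    fderiv_parabolicField_zero_apply, map_smul, hlam] at happly
  simpa using smul_right_injective _ (inv_ne_zero hg0) happly |> congrArg Prod.fst

theorem fderiv_snd_snd_of_eventually_eq {p : ℝ × ℝ × ℝ} (hμ : DifferentiableAt ℝ μ p)
    (hlam : ∀ᶠ q in 𝓝 p, (μ q).2.2 = q.2.2) (v : ℝ × ℝ × ℝ) : (fderiv ℝ μ p v).2.2 = v.2.2 := by
  have hμlam : HasFDerivAt (fun q ↦ (μ q).2.2) _ p := hμ.hasFDerivAt.snd.snd
  have hproj : HasFDerivAt (fun q : ℝ × ℝ × ℝ ↦ q.2.2) _ p :=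
    (.snd ℝ ℝ ℝ ∘L .snd ℝ ℝ (ℝ × ℝ) : ℝ × ℝ × ℝ →L[ℝ] ℝ).hasFDerivAt
  exact DFunLike.congr_fun (hμlam.unique (hproj.congr_of_eventuallyEq hlam)) v

/-- The sum of the `x`-coordinates and the difference quotient of `Hpar` in `y`, completed to a
coordinate system at the origin by `y`. -/
def stepCoordinates (μ : ℝ × ℝ × ℝ → ℝ × ℝ × ℝ) (p : ℝ × ℝ × ℝ) : ℝ × ℝ × ℝ :=
  ((μ p).1 + p.1, p.2.2 - (μ p).2.1 ^ 2 - (μ p).2.1 * p.2.1 - p.2.1 ^ 2, p.2.1)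

theorem fderiv_stepCoordinates_zero (hμ : DifferentiableAt ℝ μ 0) (hμ0 : μ 0 = 0)
    (v : ℝ × ℝ × ℝ) :
    fderiv ℝ (stepCoordinates μ) 0 v = ((fderiv ℝ μ 0 v).1 + v.1, v.2.2, v.2.1) := by
  have hμ' := hμ.hasFDerivAt
  have hy : HasFDerivAt (fun q : ℝ × ℝ × ℝ ↦ q.2.1) _ 0 :=
    (.fst ℝ ℝ ℝ ∘L .snd ℝ ℝ (ℝ × ℝ) : ℝ × ℝ × ℝ →L[ℝ] ℝ).hasFDerivAt
  have hlam : HasFDerivAt (fun q : ℝ × ℝ × ℝ ↦ q.2.2) _ 0 :=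
    (.snd ℝ ℝ ℝ ∘L .snd ℝ ℝ (ℝ × ℝ) : ℝ × ℝ × ℝ →L[ℝ] ℝ).hasFDerivAt
  have h : HasFDerivAt (stepCoordinates μ) _ 0 := (hμ'.fst.add hasFDerivAt_fst).prodMk
    ((((hlam.sub (hμ'.snd.fst.pow 2)).sub (hμ'.snd.fst.mul hy)).sub (hy.pow 2)).prodMk hy)
  rw [h.fderiv]
  simp [hμ0]

theorem isInvertible_fderiv_stepCoordinates_zero (hμ : DifferentiableAt ℝ μ 0) (hμ0 : μ 0 = 0)
    (hdμ : (fderiv ℝ μ 0 (1, 0, 0)).1 = 1) :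
    (fderiv ℝ (stepCoordinates μ) 0).IsInvertible := by
  refine isInvertible_of_injective_of_finiteDimensional
    ((injective_iff_map_eq_zero _).2 fun v hv ↦ ?_)
  simp only [fderiv_stepCoordinates_zero hμ hμ0, Prod.mk_eq_zero] at hv
  obtain ⟨hx, hlam, hy⟩ := hv
  have hvx : v = v.1 • (1, 0, 0) := by ext <;> simp [hlam, hy]
  have hx0 : v.1 = 0 := by
    rw [hvx, map_smul, Prod.smul_fst, hdμ] at hx
    simpa using hx
  rw [hvx, hx0, zero_smul]

theorem exists_isDiscreteStep (hg : DifferentiableAt ℝ g 0) (hgpos : ∀ p, 0 < g p) (hW : IsOpen W)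
    (hW0 : (0 : ℝ × ℝ × ℝ) ∈ W) (hμ : ContDiffOn ℝ ∞ μ W)
    (hμlam : ∀ p ∈ W, (μ p).2.2 = p.2.2) (hμH : ∀ p ∈ W, Hpar (μ p) = Hpar p)
    (hcomm : ∀ p ∈ W, fderiv ℝ μ p (Xpar g p) = Xpar g (μ p)) :
    ∃ U ⊆ W, IsOpen U ∧ (0 : ℝ × ℝ × ℝ) ∈ U ∧ ∃ κ : ℝ × ℝ × ℝ → ℝ, ContDiffOn ℝ ∞ κ U ∧
      ∀ p ∈ U, IsDiscreteStep (κ p) p (μ p) := by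
  have hμ0 : μ 0 = 0 := map_zero_of_commute hgpos (hμlam 0 hW0) (hcomm 0 hW0)
  have hnear : W ∈ 𝓝 (0 : ℝ × ℝ × ℝ) := hW.mem_nhds hW0
  have hμat : ContDiffAt ℝ ∞ μ 0 := hμ.contDiffAt hnear
  have hμdiff : DifferentiableAt ℝ μ 0 := hμat.differentiableAt (by simp)
  have hdμ : (fderiv ℝ μ 0 (1, 0, 0)).1 = 1 :=
    fderiv_apply_fst_of_commute hg (hgpos 0).ne' (hμat.of_le (WithTop.coe_le_coe.2 le_top)) hμ0
      (fderiv_snd_snd_of_eventually_eq hμdiff (eventually_of_mem hnear hμlam))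
      (eventually_of_mem hnear hcomm)
  have hx : ContDiffOn ℝ ∞ (fun p ↦ (μ p).1 - p.1) W := hμ.fst.sub contDiffOn_fst
  have hy : ContDiffOn ℝ ∞ (fun p ↦ (μ p).2.1 - p.2.1) W := hμ.snd.fst.sub contDiffOn_snd.fst
  have hθ : ContDiffOn ℝ ∞ (stepCoordinates μ) W := by unfold stepCoordinates; fun_prop
  obtain ⟨U, hUW, hU, hU0, k, hk, hstep⟩ := exists_local_contDiffOn_of_smul_add_smul_eq_zero
    (n := ⊤) hW hW0 (by simpa using hθ)
    (by simp [stepCoordinates, hμ0]) (isInvertible_fderiv_stepCoordinates_zero hμdiff hμ0 hdμ)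
    hx.continuousOn (by simpa using hy) fun p hp ↦ by
      have hH := hμH p hp
      simp only [Hpar, hμlam p hp] at hH
      simp only [stepCoordinates, smul_eq_mul]
      linear_combination hH
  refine ⟨U, hUW, hU, hU0, fun p ↦ -k p, hk.neg, fun p hp ↦ ?_⟩
  obtain ⟨hfst, hsnd⟩ := hstep p hp
  simp only [stepCoordinates, smul_eq_mul] at hfst hsnd
  exact ⟨by linarith, by linarith, hμlam p (hUW hp)⟩

end ReturnMap

theorem exists_contDiffOn_flowTime {g κ : ℝ × ℝ × ℝ → ℝ} {U : Set (ℝ × ℝ × ℝ)}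
    {μ : ℝ × ℝ × ℝ → ℝ × ℝ × ℝ} (hg : ContDiff ℝ ∞ g) (hgpos : ∀ p, 0 < g p) (hU : IsOpen U)
    (hU0 : 0 ∈ U) (hκ : ContDiffOn ℝ ∞ κ U) (hμ : ContinuousAt μ 0) (hμ0 : μ 0 = 0)
    (hstep : ∀ p ∈ U, IsDiscreteStep (κ p) p (μ p)) :
    ∃ V ⊆ U, IsOpen V ∧ 0 ∈ V ∧ ∃ u : ℝ × ℝ × ℝ → ℝ, ContDiffOn ℝ ∞ u V ∧
      ∀ p ∈ V, FlowsTo (Xpar g) (u p) p (μ p) := by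
  have hnear : U ∈ 𝓝 (0 : ℝ × ℝ × ℝ) := hU.mem_nhds hU0
  have hκcont : ContinuousAt κ 0 := hκ.continuousOn.continuousAt hnear
  let K : ℝ := |κ 0| + 1
  have hκ0 : κ 0 ∈ Ioo (-K) K := abs_lt.1 (lt_add_one _)
  have h0 : (0 : ℝ) ∈ Ioo (-K) K := by simpa using (by positivity : 0 < K)
  have hdisc : ContinuousAt (fun p ↦ 1 - κ p ^ 2 * (2 * (μ p).2.1 + p.2.1)) 0 := by fun_prop
  obtain ⟨V, hV, hVopen, hV0⟩ := eventually_nhds_iff.1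
    (((eventually_mem_set.2 hnear).and (eventually_forall_Icc_mem_stepDomain (-K) K)).and
      ((hκcont.eventually_mem (isOpen_Ioo.mem_nhds hκ0)).and
        (hdisc.eventually_mem (isOpen_Ioi.mem_nhds (show _ ∈ Ioi 0 by simp [hμ0])))))
  have hVU : V ⊆ U := fun p hp ↦ (hV p hp).1.1
  have hdom : ∀ p ∈ V, ∀ t ∈ Icc (-K) K, (t, p) ∈ stepDomain := fun p hp ↦ (hV p hp).1.2
  have hκK : ∀ p ∈ V, κ p ∈ Ioo (-K) K := fun p hp ↦ (hV p hp).2.1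
  refine ⟨V, hVU, hVopen, hV0, fun p ↦ ∫ t in (0 : ℝ)..κ p, stepTime g (t, p),
    contDiffOn_parametric_intervalIntegral_upper isOpen_stepDomain (contDiffOn_stepTime hg) hVopen
      (hκ.mono hVU) fun p hp t ht ↦ hdom p hp t ?_, fun p hp ↦ ?_⟩
  · exact Ioo_subset_Icc_self (ordConnected_Ioo.uIcc_subset h0 (hκK p hp) ht)
  · rw [(hstep p (hVU hp)).eq_discreteStep
      (hdom p hp _ (Ioo_subset_Icc_self (hκK p hp))).2 (hV p hp).2.2]
    exact flowsTo_discreteStep hg.continuous hgpos (hdom p hp) h0 (hκK p hp)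

theorem first_return_map_is_hamiltonian_general {g : ℝ × ℝ × ℝ → ℝ} (hg : ContDiff ℝ ∞ g)
    (hgpos : ∀ p, 0 < g p) {W : Set (ℝ × ℝ × ℝ)} (hW : IsOpen W) (hW0 : (0 : ℝ × ℝ × ℝ) ∈ W)
    {μ : ℝ × ℝ × ℝ → ℝ × ℝ × ℝ} (hμ : ContDiffOn ℝ ∞ μ W)
    (hμlam : ∀ p ∈ W, (μ p).2.2 = p.2.2) (hμH : ∀ p ∈ W, Hpar (μ p) = Hpar p)
    (hcomm : ∀ p ∈ W, fderiv ℝ μ p (Xpar g p) = Xpar g (μ p)) :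
    ∃ V ⊆ W, IsOpen V ∧ (0 : ℝ × ℝ × ℝ) ∈ V ∧
      ∃ u : ℝ × ℝ × ℝ → ℝ, ContDiffOn ℝ ∞ u V ∧
        (∀ p ∈ V, ∀ q ∈ connectedComponentIn
            {r ∈ V | Hpar r = Hpar p ∧ r.2.2 = p.2.2} p, u q = u p) ∧
        (∀ p ∈ V, ∃ γ : ℝ → ℝ × ℝ × ℝ, γ 0 = p ∧
          (∀ s ∈ uIcc (0 : ℝ) (u p), HasDerivAt γ (Xpar g (γ s)) s) ∧ γ (u p) = μ p) := by
  have hμdiff : ∀ p ∈ W, DifferentiableAt ℝ μ p := fun p hp ↦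
    (hμ.contDiffAt (hW.mem_nhds hp)).differentiableAt (by simp)
  obtain ⟨U, hUW, hU, hU0, κ, hκ, hstep⟩ := exists_isDiscreteStep
    (hg.differentiable (by simp)).differentiableAt hgpos hW hW0 hμ hμlam hμH hcomm
  obtain ⟨V, hVU, hV, hV0, u, hu, hflow⟩ := exists_contDiffOn_flowTime hg hgpos hU hU0 hκ
    (hμdiff 0 hW0).continuousAt (map_zero_of_commute hgpos (hμlam 0 hW0) (hcomm 0 hW0)) hstep
  have hVW : V ⊆ W := hVU.trans hUW
  have hudiff : DifferentiableOn ℝ u V := hu.differentiableOn (by simp)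
  have hfirst : ∀ p ∈ V, fderiv ℝ u p (parabolicField p) = 0 := by
    intro p hp
    have hX : fderiv ℝ u p (Xpar g p) = 0 := fderiv_flowTime_apply_eq_zero
      ((contDiff_Xpar hg hgpos).of_le (by simp)).locallyLipschitz (hμdiff p (hVW hp))
      (hudiff.differentiableAt (hV.mem_nhds hp)) (hcomm p (hVW hp))
      (eventually_of_mem (hV.mem_nhds hp) hflow)
    rw [Xpar_eq_inv_smul_parabolicField, map_smul] at hX
    exact (smul_eq_zero.1 hX).resolve_left (inv_ne_zero (hgpos p).ne')
  refine ⟨V, hVW, hV, hV0, u, hu, fun p hp q hq ↦ ?_, fun p hp ↦ (hflow p hp).exists_hasDerivAt⟩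
  have hlevel := connectedComponentIn_subset {r ∈ V | Hpar r = Hpar p ∧ r.2.2 = p.2.2} p
  exact eq_of_fderiv_parabolicField_eq_zero hV hudiff hfirst isPreconnected_connectedComponentIn
    (fun r hr ↦ (hlevel hr).1) (fun r hr ↦ (hlevel hr).2) hq
    (mem_connectedComponentIn ⟨hp, rfl, rfl⟩)

/-- Theorem 1 of the paper: the first return map `μ` near the parabolic point is the
time-1 map of a smooth Hamiltonian vector field `û·X`, where `û` is smooth and constant
on the connected components of the common level sets `{H = h, λ = const}`. -/
theorem first_return_map_is_hamiltonian
    (g : ℝ × ℝ × ℝ → ℝ) (hg : ContDiff ℝ (⊤ : ℕ∞) g) (hgpos : ∀ p, 0 < g p)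
    (W : Set (ℝ × ℝ × ℝ)) (hW : IsOpen W) (hW0 : (0 : ℝ × ℝ × ℝ) ∈ W)
    (μ : ℝ × ℝ × ℝ → ℝ × ℝ × ℝ) (hμ : ContDiffOn ℝ (⊤ : ℕ∞) μ W)
    (hμlam : ∀ p ∈ W, (μ p).2.2 = p.2.2)
    (hμH : ∀ p ∈ W, Hpar (μ p) = Hpar p)
    (hfix : ∀ p ∈ W, p.1 = 0 → p.2.2 = 3 * p.2.1 ^ 2 → μ p = p)
    (hcomm : ∀ p ∈ W, fderiv ℝ μ p (Xpar g p) = Xpar g (μ p))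
    (hmono : ∀ y lam : ℝ, ((0 : ℝ), y, lam) ∈ W →
      ((μ (0, y, lam)).2.1 - y) * (3 * y ^ 2 - lam) ≥ 0)
    (hxne : ∀ y lam : ℝ, ((0 : ℝ), y, lam) ∈ W → lam ≠ 3 * y ^ 2 →
      (μ (0, y, lam)).1 ≠ 0)
    (hbetween : ∀ y lam : ℝ, ((0 : ℝ), y, lam) ∈ W → lam ≠ 3 * y ^ 2 →
      ∀ t ∈ Set.Ioo (min y ((μ (0, y, lam)).2.1)) (max y ((μ (0, y, lam)).2.1)),
        t ^ 3 - lam * t - y ^ 3 + lam * y > 0) :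
    ∃ V ⊆ W, IsOpen V ∧ (0 : ℝ × ℝ × ℝ) ∈ V ∧
      ∃ u : ℝ × ℝ × ℝ → ℝ, ContDiffOn ℝ (⊤ : ℕ∞) u V ∧
        (∀ p ∈ V, ∀ q ∈ connectedComponentIn
            {r ∈ V | Hpar r = Hpar p ∧ r.2.2 = p.2.2} p, u q = u p) ∧
        (∀ p ∈ V, ∃ γ : ℝ → ℝ × ℝ × ℝ, γ 0 = p ∧
          (∀ s ∈ Set.uIcc (0 : ℝ) (u p), HasDerivAt γ (Xpar g (γ s)) s) ∧
          γ (u p) = μ p) :=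
  first_return_map_is_hamiltonian_general hg hgpos hW hW0 hμ hμlam hμH hcomm
end
end

section
/- Let U ⊆ ℝ² be an open neighbourhood of (0,0), let g : ℝ³ → ℝ be C^∞, and let a, m : U → ℝ be C^∞ functions satisfying: (i) a(y,λ)² = m(y,λ)³ − λ·m(y,λ) − y³ + λy for all (y,λ) ∈ U; (ii) a(y,λ) = 0 if and only if λ = 3y², and m(y,λ) = y whenever λ = 3y²; (iii) (m(y,λ) − y)(3y² − λ) ≥ 0 on U; (iv) for every (y,λ) ∈ U with λ ≠ 3y² and every t strictly between y and m(y,λ), t³ − λt − y³ + λy > 0. For (y,λ) ∈ U with λ ≠ 3y² define u(y,λ) = η·∫_y^{m(y,λ)} g(η·√(t³ − λt − y³ + λy), t, λ) / (2·√(t³ − λt − y³ + λy)) dt, where η = sign(a(y,λ)). Then there exist an open neighbourhood V ⊆ U of (0,0) and a C^∞ function ũ : V → ℝ such that ũ(y,λ) = u(y,λ) for every (y,λ) ∈ V with λ ≠ 3y². -/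
open MeasureTheory Set

/-!
Put `s = 3y² − λ`. Both `a` and `m − y` vanish on the parabola `s = 0`, so by Hadamard's lemma
`a = s b` and `m − y = s c` with `b`, `c` smooth. Along `t = y + s c τ²`, `0 ≤ τ ≤ 1`, the radicand
is `s² τ² c Q(τ)` with `Q(τ) = 1 + 3 y c τ² + s c² τ⁴`, which is positive near the origin.
Preservation of the Hamiltonian gives `b² = c Q(1)` off the parabola, so that the square root is
`|a| τ r(τ)` with `r(τ) = √(Q(τ) / Q(1))`. The substitution therefore turns `u` into
`∫₀¹ g(a τ r(τ), y + s c τ², λ) b / (Q(1) r(τ)) dτ`, in which neither `sign a` nor a division by `s`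
remains and whose integrand is smooth.
-/

section ParametricIntegral

open scoped ContDiff Manifold

lemma isOpen_setOf_forall_mem_of_isCompact {X Y : Type*} [TopologicalSpace X] [TopologicalSpace Y]
    {O : Set (X × Y)} (hO : IsOpen O) {K : Set Y} (hK : IsCompact K) :
    IsOpen {x | ∀ y ∈ K, (x, y) ∈ O} :=
  isOpen_iff_eventually.2 fun _ hx ↦
    hK.eventually_forall_of_forall_eventually fun y hy ↦ hO.mem_nhds (hx y hy)

lemma exists_contDiff_eqOn_one_of_isCompact {E : Type*} [NormedAddCommGroup E] [NormedSpace ℝ E]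
    [FiniteDimensional ℝ E] {K W : Set E} (hK : IsCompact K) (hW : IsOpen W) (hKW : K ⊆ W) :
    ∃ χ : E → ℝ, ContDiff ℝ ∞ χ ∧ HasCompactSupport χ ∧ tsupport χ ⊆ W ∧ EqOn χ 1 K := by
  obtain ⟨L, hL, hKL, hLW⟩ := exists_compact_between hK hW hKW
  obtain ⟨χ, hχK, hχL, -⟩ :=
    exists_contMDiffMap_one_nhds_of_subset_interior (n := ⊤) 𝓘(ℝ, E) hK.isClosed hKL
  have hsupp : tsupport χ ⊆ L :=
    closure_minimal (fun x hx ↦ by_contra fun hxL ↦ hx (hχL x hxL)) hL.isClosed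
  exact ⟨χ, χ.contMDiff.contDiff, hL.of_isClosed_subset (isClosed_tsupport χ) hsupp,
    hsupp.trans hLW, fun x hx ↦ hχK.self_of_nhdsSet x hx⟩

variable {P G F : Type*} [NormedAddCommGroup P] [NormedSpace ℝ P]
  [NormedAddCommGroup G] [NormedSpace ℝ G] [MeasurableSpace G] [BorelSpace G]
  [NormedAddCommGroup F] [NormedSpace ℝ F]

lemma contDiffOn_setIntegral_of_support {μ : Measure G} [IsFiniteMeasureOnCompacts μ]
    {n : ℕ∞} {f : P × G → F} {s : Set P} {K L : Set G} (hs : IsOpen s)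
    (hK : IsCompact K) (hL : IsCompact L)
    (hf : ContDiffOn ℝ n f (s ×ˢ univ)) (hfL : ∀ x ∈ s, ∀ t ∉ L, f (x, t) = 0) :
    ContDiffOn ℝ n (fun x ↦ ∫ t in K, f (x, t) ∂μ) s := by
  -- The integral is the convolution of the indicator of `K` with `t ↦ f (x, -t)`, evaluated at `0`.
  have hreflect : ContDiffOn ℝ n (fun q : P × G ↦ f (q.1, -q.2)) (s ×ˢ univ) :=
    hf.comp (by fun_prop) fun q hq ↦ ⟨hq.1, trivial⟩
  have hconv := contDiffOn_convolution_right_with_param (μ := μ)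
    (f := K.indicator fun _ ↦ (1 : ℝ)) (g := fun x t ↦ f (x, -t))
    (ContinuousLinearMap.lsmul ℝ ℝ) hs hL.neg
    (fun x t hx ht ↦ hfL x hx _ ht)
    (((integrableOn_const hK.measure_ne_top).integrable_indicator
      hK.measurableSet).locallyIntegrable) hreflect
  have hzero : ContDiffOn ℝ n (fun x : P ↦ (x, (0 : G))) s := by fun_prop
  refine (hconv.comp hzero fun x hx ↦ ⟨hx, trivial⟩).congr fun x _ ↦ ?_
  simp only [Function.comp_apply, convolution, ContinuousLinearMap.lsmul_apply, zero_sub, neg_neg,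
    ← integral_indicator hK.measurableSet]
  congr 1 with t
  by_cases ht : t ∈ K <;> simp [ht]

theorem contDiffOn_setIntegral_of_isCompact [FiniteDimensional ℝ G]
    {μ : Measure G} [IsFiniteMeasureOnCompacts μ]
    {n : ℕ∞} {f : P × G → F} {O : Set (P × G)} {s : Set P} {K : Set G} (hK : IsCompact K)
    (hO : IsOpen O) (hf : ContDiffOn ℝ n f O) (hsO : s ×ˢ K ⊆ O) :
    ContDiffOn ℝ n (fun x ↦ ∫ t in K, f (x, t) ∂μ) s := by
  intro x hx
  obtain ⟨v, w, hv, hw, hxv, hKw, hvw⟩ := generalized_tube_lemma isCompact_singleton hK hO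
    ((prod_mono_left (singleton_subset_iff.2 hx)).trans hsO)
  obtain ⟨χ, hχ, hχc, hχw, hχK⟩ := exists_contDiff_eqOn_one_of_isCompact hK hw hKw
  have hcut : ContDiffOn ℝ n (fun q : P × G ↦ χ q.2 • f q) (v ×ˢ univ) := by
    intro q hq
    by_cases hqw : q.2 ∈ tsupport χ
    · have hqO : O ∈ nhds q := hO.mem_nhds (hvw ⟨hq.1, hχw hqw⟩)
      exact ((((hχ.of_le (mod_cast le_top)).comp contDiff_snd).contDiffAt).smul
        (hf.contDiffAt hqO)).contDiffWithinAt
    · have hvanish : (fun q : P × G ↦ χ q.2 • f q) =ᶠ[nhds q] 0 :=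
        ((notMem_tsupport_iff_eventuallyEq.1 hqw).comp_tendsto continuousAt_snd).mono
          fun q hq ↦ by simp_all
      exact (contDiffAt_const.congr_of_eventuallyEq hvanish).contDiffWithinAt
  have hint := contDiffOn_setIntegral_of_support (μ := μ) hv hK hχc.isCompact hcut
    fun x _ t ht ↦ by simp [image_eq_zero_of_notMem_tsupport ht]
  refine (hint.contDiffAt (hv.mem_nhds (hxv rfl))).contDiffWithinAt.congr_of_eventuallyEq_of_mem
    (.of_forall fun y ↦ setIntegral_congr_fun hK.measurableSet fun t ht ↦ ?_) hx
  simp [hχK ht]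

theorem contDiffOn_intervalIntegral {n : ℕ∞} {f : P × ℝ → F} {O : Set (P × ℝ)} {s : Set P}
    {a b : ℝ} (hO : IsOpen O) (hf : ContDiffOn ℝ n f O) (hsO : s ×ˢ uIcc a b ⊆ O) :
    ContDiffOn ℝ n (fun x ↦ ∫ t in a..b, f (x, t)) s := by
  have hset := contDiffOn_setIntegral_of_isCompact (μ := volume) isCompact_uIcc hO hf hsO
  simp only [intervalIntegral.intervalIntegral_eq_integral_uIoc, uIoc,
    ← integral_Icc_eq_integral_Ioc]
  exact hset.const_smul _

end ParametricIntegral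

section Hadamard

open scoped ContDiff

variable {E F : Type*} [NormedAddCommGroup E] [NormedSpace ℝ E]
  [NormedAddCommGroup F] [NormedSpace ℝ F]

lemma eq_smul_integral_fderiv_of_eq_zero [CompleteSpace F] {f : E × ℝ → F} {U : Set (E × ℝ)}
    (hU : IsOpen U) (hf : ContDiffOn ℝ 1 f U) {x : E} {y z : ℝ} (hfy : f (x, y) = 0)
    (hseg : ∀ t ∈ Icc (0 : ℝ) 1, (x, AffineMap.lineMap y z t) ∈ U) :
    f (x, z) = (y - z) • ∫ t in (0 : ℝ)..1, fderiv ℝ f (x, AffineMap.lineMap y z t) (0, -1) := by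
  rw [← uIcc_of_le zero_le_one] at hseg
  have hderiv : ∀ t ∈ uIcc (0 : ℝ) 1, HasDerivAt (fun t ↦ f (x, AffineMap.lineMap y z t))
      ((y - z) • fderiv ℝ f (x, AffineMap.lineMap y z t) (0, -1)) t := by
    intro t ht
    have hf' := ((hf.contDiffAt (hU.mem_nhds (hseg t ht))).differentiableAt one_ne_zero).hasFDerivAt
    have h := hf'.comp_hasDerivAt t
      ((hasDerivAt_const t x).prodMk (AffineMap.hasDerivAt_lineMap (a := y) (b := z)))
    simpa [Function.comp_def, ← map_smul] using h
  have hcont : ContinuousOn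
      (fun t ↦ (y - z) • fderiv ℝ f (x, AffineMap.lineMap y z t) (0, -1)) (uIcc (0 : ℝ) 1) := by
    have hpath : Continuous fun t : ℝ ↦ (x, AffineMap.lineMap y z t) := by fun_prop
    exact (((hf.continuousOn_fderiv_of_isOpen hU le_rfl).comp hpath.continuousOn hseg).clm_apply
      continuousOn_const).const_smul _
  rw [← intervalIntegral.integral_smul,
    intervalIntegral.integral_eq_sub_of_hasDerivAt hderiv hcont.intervalIntegrable]
  simp [hfy]

theorem exists_contDiffOn_eq_smul_of_eq_zero_on_graph [CompleteSpace F]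
    {h : E → ℝ} (hh : ContDiff ℝ ∞ h) {f : E × ℝ → F} {U : Set (E × ℝ)} (hU : IsOpen U)
    (hf : ContDiffOn ℝ ∞ f U) (hf0 : ∀ x, (x, h x) ∈ U → f (x, h x) = 0) :
    ∃ V ⊆ U, IsOpen V ∧ (∀ x, (x, h x) ∈ U → (x, h x) ∈ V) ∧
      ∃ q : E × ℝ → F, ContDiffOn ℝ ∞ q V ∧ ∀ p ∈ V, f p = (h p.1 - p.2) • q p := by
  let segment (r : (E × ℝ) × ℝ) : E × ℝ := (r.1.1, AffineMap.lineMap (h r.1.1) r.1.2 r.2)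
  have hsegment : ContDiff ℝ ∞ segment := by
    simp only [segment, AffineMap.lineMap_apply_module]
    fun_prop
  have hO : IsOpen (segment ⁻¹' U) := hU.preimage hsegment.continuous
  let V := {p | ∀ t ∈ Icc (0 : ℝ) 1, (p, t) ∈ segment ⁻¹' U}
  refine ⟨V, fun p hp ↦ by simpa [segment] using hp 1 (by simp),
    isOpen_setOf_forall_mem_of_isCompact hO isCompact_Icc,
    fun x hx t _ ↦ by simpa [segment] using hx,
    fun p ↦ ∫ t in (0 : ℝ)..1, fderiv ℝ f (segment (p, t)) (0, -1), ?_, fun p hp ↦ ?_⟩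
  · have hf' : ContDiffOn ℝ ∞ (fun r ↦ fderiv ℝ f (segment r) (0, -1)) (segment ⁻¹' U) :=
      ((hf.fderiv_of_isOpen hU le_rfl).comp hsegment.contDiffOn fun r hr ↦ hr).clm_apply
        contDiffOn_const
    refine contDiffOn_intervalIntegral (f := fun r ↦ fderiv ℝ f (segment r) (0, -1)) hO hf' ?_
    rintro ⟨p, t⟩ ⟨hp, ht⟩
    exact hp t (by rwa [uIcc_of_le zero_le_one] at ht)
  · exact eq_smul_integral_fderiv_of_eq_zero hU (hf.of_le (by norm_num))
      (hf0 p.1 (by simpa [segment] using hp 0 (by simp))) hp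

end Hadamard

section TimeFunction

lemma integral_comp_add_mul_sq {E : Type*} [NormedAddCommGroup E] [NormedSpace ℝ E]
    (f : ℝ → E) (y w : ℝ) :
    ∫ τ in (0 : ℝ)..1, (w * (2 * τ)) • f (y + w * τ ^ 2) = ∫ t in y..(y + w), f t := by
  have hcont : ContinuousOn (fun τ : ℝ ↦ y + w * τ ^ 2) (uIcc 0 1) := by fun_prop
  have hderiv (τ : ℝ) : HasDerivAt (fun τ ↦ y + w * τ ^ 2) (w * (2 * τ)) τ := by
    simpa using ((hasDerivAt_pow 2 τ).const_mul w).const_add y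
  have hτ : ∀ τ ∈ Ioo (min (0 : ℝ) 1) (max 0 1), 0 ≤ 2 * τ := by
    intro τ hτ
    simp only [zero_le_one, inf_of_le_left, sup_of_le_right, mem_Ioo] at hτ
    linarith
  rcases le_total 0 w with hw | hw
  · simpa using intervalIntegral.integral_deriv_smul_comp_of_deriv_nonneg (g := f) hcont
      (fun τ _ ↦ hderiv τ) fun τ h ↦ mul_nonneg hw (hτ τ h)
  · simpa using intervalIntegral.integral_deriv_smul_comp_of_deriv_nonpos (g := f) hcont
      (fun τ _ ↦ hderiv τ) fun τ h ↦ mul_nonpos_of_nonpos_of_nonneg hw (hτ τ h)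

lemma sign_mul_abs_self (x : ℝ) : Real.sign x * |x| = x := by
  rcases lt_trichotomy x 0 with hx | rfl | hx
  · simp [Real.sign_of_neg hx, abs_of_neg hx]
  · simp
  · simp [Real.sign_of_pos hx, abs_of_pos hx]

lemma sign_div_abs_self (x : ℝ) : Real.sign x / |x| = x⁻¹ := by
  rcases lt_trichotomy x 0 with hx | rfl | hx
  · simp [Real.sign_of_neg hx, abs_of_neg hx, div_eq_mul_inv, inv_neg]
  · simp
  · simp [Real.sign_of_pos hx, abs_of_pos hx]

/-- The value of `x ^ 2` at height `t` on the level curve of `H(x, y, λ) = x² − y³ + λy` through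
`(0, y)`, where `p = (y, λ)`. -/
def levelSq (p : ℝ × ℝ) (t : ℝ) : ℝ := t ^ 3 - p.2 * t - p.1 ^ 3 + p.2 * p.1

/-- The time function `u(y, λ)` of a return map `(a, m)`, at `p = (y, λ)`. -/
noncomputable def timeFunction (g : ℝ × ℝ × ℝ → ℝ) (a m : ℝ × ℝ → ℝ) (p : ℝ × ℝ) : ℝ :=
  Real.sign (a p) * ∫ t in p.1..(m p),
    g (Real.sign (a p) * √(levelSq p t), t, p.2) / (2 * √(levelSq p t))

/-- The defect `3y² − λ` of `p = (y, λ)` from the parabola of fixed points. -/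
def parabolaDefect (p : ℝ × ℝ) : ℝ := 3 * p.1 ^ 2 - p.2

/-- The arc `τ ↦ t` from `y` to `m = y + parabolaDefect p * κ`, for `p = (y, λ)`. It is quadratic
in `τ` in order to absorb the square root singularity of the time integral at `t = y`. -/
def arcHeight (p : ℝ × ℝ) (κ τ : ℝ) : ℝ := p.1 + parabolaDefect p * κ * τ ^ 2

/-- The factor of `levelSq` along `arcHeight` that stays positive near the parabolic point, being
`1` at `p = 0`. -/
def arcFactor (p : ℝ × ℝ) (κ τ : ℝ) : ℝ :=
  1 + 3 * p.1 * κ * τ ^ 2 + parabolaDefect p * κ ^ 2 * τ ^ 4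

/-- The ratio `|x| / (|a| τ)` along `arcHeight`, where `x ^ 2 = levelSq`. -/
noncomputable def arcRoot (p : ℝ × ℝ) (κ τ : ℝ) : ℝ := √(arcFactor p κ τ / arcFactor p κ 1)

/-- The integrand of the time function in the parameter `τ` of `arcHeight`, after cancelling
`parabolaDefect` from `a = parabolaDefect * b` and `m - y = parabolaDefect * c`. -/
noncomputable def regularizedIntegrand (g : ℝ × ℝ × ℝ → ℝ) (a b c : ℝ × ℝ → ℝ) (p : ℝ × ℝ)
    (τ : ℝ) : ℝ :=
  g (a p * τ * arcRoot p (c p) τ, arcHeight p (c p) τ, p.2) *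
    (b p / (arcFactor p (c p) 1 * arcRoot p (c p) τ))

/-- The pairs `(p, τ)` with `p ∈ W` at which `arcRoot` is the square root of a quotient of positive
numbers, so that the regularized integrand is smooth. -/
def regularDomain (c : ℝ × ℝ → ℝ) (W : Set (ℝ × ℝ)) : Set ((ℝ × ℝ) × ℝ) :=
  {r | r.1 ∈ W ∧ 0 < arcFactor r.1 (c r.1) r.2 ∧ 0 < arcFactor r.1 (c r.1) 1}

section Pointwise

variable {p : ℝ × ℝ} {α β κ : ℝ}

lemma levelSq_arcHeight (p : ℝ × ℝ) (κ τ : ℝ) :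
    levelSq p (arcHeight p κ τ) = (parabolaDefect p * τ) ^ 2 * (κ * arcFactor p κ τ) := by
  simp only [levelSq, arcHeight, arcFactor, parabolaDefect]
  ring

lemma sq_eq_mul_arcFactor_one (hp : parabolaDefect p ≠ 0)
    (hH : (parabolaDefect p * β) ^ 2 = levelSq p (arcHeight p κ 1)) :
    β ^ 2 = κ * arcFactor p κ 1 := by
  rw [levelSq_arcHeight, mul_pow, mul_one] at hH
  exact mul_left_cancel₀ (pow_ne_zero 2 hp) hH

lemma sqrt_levelSq_arcHeight {τ : ℝ} (hτ : 0 ≤ τ) (hτpos : 0 < arcFactor p κ τ)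
    (h1pos : 0 < arcFactor p κ 1) (hβ : β ^ 2 = κ * arcFactor p κ 1) :
    √(levelSq p (arcHeight p κ τ)) = |parabolaDefect p * β| * τ * arcRoot p κ τ := by
  have hroot : arcRoot p κ τ ^ 2 = arcFactor p κ τ / arcFactor p κ 1 :=
    Real.sq_sqrt (div_pos hτpos h1pos).le
  have hnonneg : 0 ≤ |parabolaDefect p * β| * τ * arcRoot p κ τ :=
    mul_nonneg (by positivity) (Real.sqrt_nonneg _)
  rw [← Real.sqrt_sq hnonneg, levelSq_arcHeight]
  congr 1
  rw [mul_pow, mul_pow, mul_pow, sq_abs, mul_pow, hβ, hroot]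
  field_simp

lemma sign_mul_integrand_arcHeight (G : ℝ → ℝ) {τ : ℝ} (hτ : 0 < τ) (hτpos : 0 < arcFactor p κ τ)
    (h1pos : 0 < arcFactor p κ 1) (hp : parabolaDefect p ≠ 0) (hα : α = parabolaDefect p * β)
    (hβ : β ^ 2 = κ * arcFactor p κ 1) :
    Real.sign α * (parabolaDefect p * κ * (2 * τ) *
      (G (Real.sign α * √(levelSq p (arcHeight p κ τ))) /
        (2 * √(levelSq p (arcHeight p κ τ))))) =
      G (α * τ * arcRoot p κ τ) * (β / (arcFactor p κ 1 * arcRoot p κ τ)) := by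
  have hspeed : parabolaDefect p * κ * α⁻¹ = β / arcFactor p κ 1 := by
    rcases eq_or_ne β 0 with rfl | hβ0
    · simp [hα]
    · rw [hα]
      field_simp
      exact hβ.symm
  have hx : Real.sign α * √(levelSq p (arcHeight p κ τ)) = α * τ * arcRoot p κ τ := by
    rw [sqrt_levelSq_arcHeight hτ.le hτpos h1pos hβ, ← hα, ← mul_assoc, ← mul_assoc,
      sign_mul_abs_self]
  rw [hx, sqrt_levelSq_arcHeight hτ.le hτpos h1pos hβ, ← hα, ← div_div β, ← hspeed,
    ← sign_div_abs_self]
  field_simp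

theorem timeFunction_eq_integral_regularizedIntegrand (g : ℝ × ℝ × ℝ → ℝ) {a m b c : ℝ × ℝ → ℝ}
    (hp : parabolaDefect p ≠ 0) (ha : a p = parabolaDefect p * b p)
    (hm : m p = p.1 + parabolaDefect p * c p) (hH : a p ^ 2 = levelSq p (m p))
    (hpos : ∀ τ ∈ Icc (0 : ℝ) 1, 0 < arcFactor p (c p) τ) :
    timeFunction g a m p = ∫ τ in (0 : ℝ)..1, regularizedIntegrand g a b c p τ := by
  have hb : b p ^ 2 = c p * arcFactor p (c p) 1 :=
    sq_eq_mul_arcFactor_one hp (by simpa [ha, hm, arcHeight] using hH)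
  rw [timeFunction, hm, ← integral_comp_add_mul_sq, ← intervalIntegral.integral_const_mul]
  -- The integrands differ at `τ = 0`, where the left one is `0` by division by zero.
  refine intervalIntegral.integral_congr_ae (.of_forall fun τ hτ ↦ ?_)
  rw [uIoc_of_le zero_le_one] at hτ
  exact sign_mul_integrand_arcHeight (fun x ↦ g (x, arcHeight p (c p) τ, p.2)) hτ.1
    (hpos τ ⟨hτ.1.le, hτ.2⟩) (hpos 1 (by simp)) hp ha hb

end Pointwise

section Smoothness

open scoped ContDiff

variable {g : ℝ × ℝ × ℝ → ℝ} {a b c : ℝ × ℝ → ℝ} {W : Set (ℝ × ℝ)}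

lemma contDiff_arcHeight :
    ContDiff ℝ ∞ fun q : (ℝ × ℝ) × ℝ × ℝ ↦ arcHeight q.1 q.2.1 q.2.2 := by
  simp only [arcHeight, parabolaDefect]
  fun_prop

lemma contDiff_arcFactor :
    ContDiff ℝ ∞ fun q : (ℝ × ℝ) × ℝ × ℝ ↦ arcFactor q.1 q.2.1 q.2.2 := by
  simp only [arcFactor, parabolaDefect]
  fun_prop

lemma isOpen_regularDomain (hW : IsOpen W) (hc : ContinuousOn c W) :
    IsOpen (regularDomain c W) := by
  have hc' : ContinuousOn (fun r : (ℝ × ℝ) × ℝ ↦ c r.1) (Prod.fst ⁻¹' W) :=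
    hc.comp continuousOn_fst fun _ hr ↦ hr
  have hfactors : ContinuousOn
      (fun r : (ℝ × ℝ) × ℝ ↦ (arcFactor r.1 (c r.1) r.2, arcFactor r.1 (c r.1) 1))
      (Prod.fst ⁻¹' W) :=
    (contDiff_arcFactor.continuous.comp_continuousOn
      (continuousOn_fst.prodMk (hc'.prodMk continuousOn_snd))).prodMk
    (contDiff_arcFactor.continuous.comp_continuousOn
      (continuousOn_fst.prodMk (hc'.prodMk continuousOn_const)))
  exact hfactors.isOpen_inter_preimage (hW.preimage continuous_fst) (isOpen_Ioi.prod isOpen_Ioi)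

theorem contDiffOn_regularizedIntegrand (hg : ContDiff ℝ ∞ g) (ha : ContDiffOn ℝ ∞ a W)
    (hb : ContDiffOn ℝ ∞ b W) (hc : ContDiffOn ℝ ∞ c W) :
    ContDiffOn ℝ ∞ (fun r : (ℝ × ℝ) × ℝ ↦ regularizedIntegrand g a b c r.1 r.2)
      (regularDomain c W) := by
  have hfst : MapsTo Prod.fst (regularDomain c W) W := fun r hr ↦ hr.1
  have ha' := ha.comp contDiffOn_fst hfst
  have hb' := hb.comp contDiffOn_fst hfst
  have hc' := hc.comp contDiffOn_fst hfst
  have hendpoint := contDiff_arcFactor.comp_contDiffOn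
    (contDiffOn_fst.prodMk (hc'.prodMk (contDiffOn_const (c := (1 : ℝ)))))
  have harc := contDiffOn_fst.prodMk (hc'.prodMk contDiffOn_snd)
  have hroot : ContDiffOn ℝ ∞ (fun r : (ℝ × ℝ) × ℝ ↦ arcRoot r.1 (c r.1) r.2)
      (regularDomain c W) :=
    ((contDiff_arcFactor.comp_contDiffOn harc).div hendpoint fun r hr ↦ hr.2.2.ne').sqrt
      fun r hr ↦ (div_pos hr.2.1 hr.2.2).ne'
  have hpoint := ((ha'.mul contDiffOn_snd).mul hroot).prodMk
    ((contDiff_arcHeight.comp_contDiffOn harc).prodMk (contDiff_snd.comp contDiff_fst).contDiffOn)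
  exact (hg.comp_contDiffOn hpoint).mul (hb'.div (hendpoint.mul hroot) fun r hr ↦
    (mul_pos hr.2.2 (Real.sqrt_pos.2 (div_pos hr.2.1 hr.2.2))).ne')

end Smoothness

end TimeFunction

theorem time_function_smooth_extension_general
    (U : Set (ℝ × ℝ)) (hU : IsOpen U) (hU0 : ((0 : ℝ), (0 : ℝ)) ∈ U)
    (g : ℝ × ℝ × ℝ → ℝ) (hg : ContDiff ℝ (⊤ : ℕ∞) g)
    (a m : ℝ × ℝ → ℝ) (ha : ContDiffOn ℝ (⊤ : ℕ∞) a U) (hm : ContDiffOn ℝ (⊤ : ℕ∞) m U)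
    (hH : ∀ p ∈ U, a p ^ 2 = levelSq p (m p))
    (hfix : ∀ p ∈ U, p.2 = 3 * p.1 ^ 2 → m p = p.1) :
    ∃ V ⊆ U, IsOpen V ∧ ((0 : ℝ), (0 : ℝ)) ∈ V ∧
      ∃ u : ℝ × ℝ → ℝ, ContDiffOn ℝ (⊤ : ℕ∞) u V ∧
        ∀ p ∈ V, p.2 ≠ 3 * p.1 ^ 2 → u p = timeFunction g a m p := by
  have hparabola : ContDiff ℝ (⊤ : ℕ∞) fun y : ℝ ↦ 3 * y ^ 2 := by fun_prop
  have ha0 (y : ℝ) (hy : (y, 3 * y ^ 2) ∈ U) : a (y, 3 * y ^ 2) = 0 := by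
    simpa [levelSq, hfix _ hy rfl] using hH _ hy
  obtain ⟨Va, -, hVa, hVa0, b, hb, hab⟩ :=
    exists_contDiffOn_eq_smul_of_eq_zero_on_graph hparabola hU ha ha0
  obtain ⟨Vm, hVmU, hVm, hVm0, c, hc, hmc⟩ :=
    exists_contDiffOn_eq_smul_of_eq_zero_on_graph (f := fun p ↦ m p - p.1) hparabola hU
      (hm.sub contDiffOn_fst) fun y hy ↦ sub_eq_zero.2 (hfix _ hy rfl)
  have hc' := hc.mono (inter_subset_right (s := Va))
  have hO := isOpen_regularDomain (hVa.inter hVm) hc'.continuousOn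
  let V := {p | ∀ τ ∈ Icc (0 : ℝ) 1, (p, τ) ∈ regularDomain c (Va ∩ Vm)}
  have hV {p : ℝ × ℝ} (hp : p ∈ V) : p ∈ Va ∩ Vm := (hp 0 (by simp)).1
  have h0 : ((0 : ℝ), (0 : ℝ)) ∈ Va ∩ Vm :=
    ⟨by simpa using hVa0 0 (by simpa), by simpa using hVm0 0 (by simpa)⟩
  refine ⟨V, fun p hp ↦ hVmU (hV hp).2, isOpen_setOf_forall_mem_of_isCompact hO isCompact_Icc,
    fun τ _ ↦ ⟨h0, by simp [arcFactor, parabolaDefect], by simp [arcFactor, parabolaDefect]⟩,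
    fun p ↦ ∫ τ in (0 : ℝ)..1, regularizedIntegrand g a b c p τ, ?_, fun p hp hne ↦ ?_⟩
  · refine contDiffOn_intervalIntegral hO (contDiffOn_regularizedIntegrand hg
      (ha.mono (inter_subset_right.trans hVmU)) (hb.mono inter_subset_left) hc') ?_
    rintro ⟨p, τ⟩ ⟨hp, hτ⟩
    exact hp τ (by rwa [uIcc_of_le zero_le_one] at hτ)
  · exact (timeFunction_eq_integral_regularizedIntegrand g (sub_ne_zero.2 hne.symm)
      (hab p (hV hp).1) (eq_add_of_sub_eq' (by simpa [parabolaDefect] using hmc p (hV hp).2))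
      (hH p (hVmU (hV hp).2)) fun τ hτ ↦ (hp τ hτ).2.1).symm

/-- The Lemma of the paper: the time function
`u(y,λ) = η ∫_y^{m(y,λ)} g(η√(t³−λt−y³+λy), t, λ) / (2√(t³−λt−y³+λy)) dt`,
`η = sign a(y,λ)`, defined off the parabola `λ = 3y²`, admits a smooth extension to a
neighbourhood of the origin. Here `a` and `m` are the components of the first return
map on the section `x = 0`. -/
theorem time_function_smooth_extension
    (U : Set (ℝ × ℝ)) (hU : IsOpen U) (hU0 : ((0 : ℝ), (0 : ℝ)) ∈ U)
    (g : ℝ × ℝ × ℝ → ℝ) (hg : ContDiff ℝ (⊤ : ℕ∞) g)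
    (a m : ℝ × ℝ → ℝ) (ha : ContDiffOn ℝ (⊤ : ℕ∞) a U) (hm : ContDiffOn ℝ (⊤ : ℕ∞) m U)
    (hH : ∀ p ∈ U, (a p) ^ 2 = (m p) ^ 3 - p.2 * m p - p.1 ^ 3 + p.2 * p.1)
    (hzero : ∀ p ∈ U, (a p = 0 ↔ p.2 = 3 * p.1 ^ 2))
    (hfix : ∀ p ∈ U, p.2 = 3 * p.1 ^ 2 → m p = p.1)
    (hmono : ∀ p ∈ U, (m p - p.1) * (3 * p.1 ^ 2 - p.2) ≥ 0)
    (hbetween : ∀ p ∈ U, p.2 ≠ 3 * p.1 ^ 2 →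
      ∀ t ∈ Set.Ioo (min p.1 (m p)) (max p.1 (m p)),
        t ^ 3 - p.2 * t - p.1 ^ 3 + p.2 * p.1 > 0) :
    ∃ V ⊆ U, IsOpen V ∧ ((0 : ℝ), (0 : ℝ)) ∈ V ∧
      ∃ u : ℝ × ℝ → ℝ, ContDiffOn ℝ (⊤ : ℕ∞) u V ∧
        ∀ p ∈ V, p.2 ≠ 3 * p.1 ^ 2 →
          u p = Real.sign (a p) *
            ∫ t in p.1..(m p),
              g (Real.sign (a p) * Real.sqrt (t ^ 3 - p.2 * t - p.1 ^ 3 + p.2 * p.1),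
                  t, p.2) /
                (2 * Real.sqrt (t ^ 3 - p.2 * t - p.1 ^ 3 + p.2 * p.1)) := by
  exact time_function_smooth_extension_general U hU hU0 g hg a m ha hm hH hfix
end

section
/- Let y, λ ∈ ℝ with 3y² − λ > 0, let ν > 0, set m = y + ν, and suppose t³ − λt − y³ + λy > 0 for all t ∈ (y, m]. Let g : ℝ² → ℝ be continuous. Then ∫_y^m g(√(t³ − λt − y³ + λy), t) / (2·√(t³ − λt − y³ + λy)) dt = ν·∫_0^1 g(z·√(z⁴ν³ + 3z²ν²y + 3νy² − λν), y + z²ν) / √(z⁴ν³ + 3z²ν²y + 3νy² − λν) dz, both integrals being well defined (the integrands are integrable on the respective intervals). -/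
open MeasureTheory

/-!
The radicand vanishes at `t = y`, so it is `(t - y) * q t`, and under `t = y + z²ν` its square root
becomes `z * √(ν * q t)`. The factor `z` cancels against `dt = 2zν dz`, which removes the endpoint
singularity: since `ν * q` is positive on the closed interval, the new integrand is continuous.
Because `2zν` has constant sign on `[0, 1]`, the change of variables is monotone and carries this
integrability back to the singular integrand in `t`.
-/

open Set

section QuadraticSubstitution

theorem hasDerivAt_add_sq_mul {𝕜 : Type*} [NontriviallyNormedField 𝕜] (y ν z : 𝕜) :
    HasDerivAt (fun z : 𝕜 => y + z ^ 2 * ν) (2 * z * ν) z := by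
  simpa using ((hasDerivAt_pow 2 z).mul_const ν).const_add y

theorem add_sq_mul_mem_uIcc {𝕜 : Type*} [Field 𝕜] [LinearOrder 𝕜] [IsStrictOrderedRing 𝕜]
    (y ν : 𝕜) {z : 𝕜} (hz : z ∈ Icc 0 1) : y + z ^ 2 * ν ∈ uIcc y (y + ν) :=
  (convex_uIcc y (y + ν)).add_smul_mem left_mem_uIcc right_mem_uIcc
    ⟨sq_nonneg z, pow_le_one₀ hz.1 hz.2⟩

theorem smul_inv_two_mul_sqrt_sq_mul_smul {X : Type*} [MulAction ℝ X] (h : ℝ → X)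
    {z : ℝ} (hz : 0 < z) (ν p : ℝ) :
    (2 * z * ν) • (2 * √(z ^ 2 * p))⁻¹ • h √(z ^ 2 * p) = ν • (√p)⁻¹ • h (z * √p) := by
  have hsqrt : √(z ^ 2 * p) = z * √p := by
    rw [Real.sqrt_mul (sq_nonneg z), Real.sqrt_sq hz.le]
  have hcancel : 2 * z * ν * (2 * (z * √p))⁻¹ = ν * (√p)⁻¹ := by
    -- `√p` may be `0`; distributing `⁻¹` keeps the junk value `0⁻¹ = 0` on both sides.
    rw [mul_inv, mul_inv]
    field_simp
  rw [hsqrt, smul_smul, hcancel, mul_smul]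

theorem eqOn_smul_inv_sqrt_comp_add_sq_mul {X : Type*} [MulAction ℝ X]
    (q : ℝ → ℝ) (g : ℝ × ℝ → X) (y ν : ℝ) :
    EqOn
      (fun z : ℝ => (2 * z * ν) •
        (fun t : ℝ => (2 * √((t - y) * q t))⁻¹ • g (√((t - y) * q t), t)) (y + z ^ 2 * ν))
      (fun z : ℝ => ν •
        (√(ν * q (y + z ^ 2 * ν)))⁻¹ • g (z * √(ν * q (y + z ^ 2 * ν)), y + z ^ 2 * ν))
      (uIoc 0 1) := by
  intro z hz
  rw [uIoc_of_le zero_le_one] at hz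
  simpa only [add_sub_cancel_left, mul_assoc] using
    smul_inv_two_mul_sqrt_sq_mul_smul (fun s => g (s, y + z ^ 2 * ν)) hz.1 ν
      (ν * q (y + z ^ 2 * ν))

variable {E : Type*} [NormedAddCommGroup E] [NormedSpace ℝ E]

theorem intervalIntegrable_smul_comp_add_sq_mul_iff (F : ℝ → E) (y ν : ℝ) :
    IntervalIntegrable (fun z : ℝ => (2 * z * ν) • F (y + z ^ 2 * ν)) volume 0 1 ↔
      IntervalIntegrable F volume y (y + ν) := by
  have hz_nonneg : ∀ z ∈ Ioo (min (0 : ℝ) 1) (max 0 1), 0 ≤ 2 * z := by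
    simp +contextual [le_of_lt]
  rcases le_total 0 ν with hν | hν
  · simpa using intervalIntegral.integrable_deriv_smul_comp_iff_of_deriv_nonneg (g := F)
      (by fun_prop) (fun z _ => hasDerivAt_add_sq_mul y ν z) fun z hz =>
        mul_nonneg (hz_nonneg z hz) hν
  · simpa using intervalIntegral.integrable_deriv_smul_comp_iff_of_deriv_nonpos (g := F)
      (by fun_prop) (fun z _ => hasDerivAt_add_sq_mul y ν z) fun z hz =>
        mul_nonpos_of_nonneg_of_nonpos (hz_nonneg z hz) hν

theorem integral_smul_comp_add_sq_mul (F : ℝ → E) (y ν : ℝ) :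
    ∫ z in (0 : ℝ)..1, (2 * z * ν) • F (y + z ^ 2 * ν) = ∫ t in y..(y + ν), F t := by
  have hz_nonneg : ∀ z ∈ Ioo (min (0 : ℝ) 1) (max 0 1), 0 ≤ 2 * z := by
    simp +contextual [le_of_lt]
  rcases le_total 0 ν with hν | hν
  · simpa using intervalIntegral.integral_deriv_smul_comp_of_deriv_nonneg (g := F)
      (by fun_prop) (fun z _ => hasDerivAt_add_sq_mul y ν z) fun z hz =>
        mul_nonneg (hz_nonneg z hz) hν
  · simpa using intervalIntegral.integral_deriv_smul_comp_of_deriv_nonpos (g := F)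
      (by fun_prop) (fun z _ => hasDerivAt_add_sq_mul y ν z) fun z hz =>
        mul_nonpos_of_nonneg_of_nonpos (hz_nonneg z hz) hν

theorem continuousOn_inv_sqrt_smul_comp_add_sq_mul {q : ℝ → ℝ} {g : ℝ × ℝ → E} {y ν : ℝ}
    (hq : ContinuousOn q (uIcc y (y + ν))) (hq_pos : ∀ t ∈ uIcc y (y + ν), 0 < ν * q t)
    (hg : ContinuousOn g (Ici 0 ×ˢ uIcc y (y + ν))) :
    ContinuousOn
      (fun z : ℝ =>
        (√(ν * q (y + z ^ 2 * ν)))⁻¹ • g (z * √(ν * q (y + z ^ 2 * ν)), y + z ^ 2 * ν))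
      (Icc 0 1) := by
  have hmaps : MapsTo (fun z : ℝ => y + z ^ 2 * ν) (Icc 0 1) (uIcc y (y + ν)) :=
    fun _ hz => add_sq_mul_mem_uIcc y ν hz
  have hsub : ContinuousOn (fun z : ℝ => y + z ^ 2 * ν) (Icc 0 1) := by fun_prop
  have hsqrt : ContinuousOn (fun z : ℝ => √(ν * q (y + z ^ 2 * ν))) (Icc 0 1) :=
    (continuousOn_const.mul (hq.comp hsub hmaps)).sqrt
  refine (hsqrt.inv₀ fun z hz => (Real.sqrt_pos.2 (hq_pos _ (hmaps hz))).ne').smul ?_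
  exact hg.comp ((continuousOn_id.mul hsqrt).prodMk hsub) fun z hz =>
    ⟨mul_nonneg hz.1 (Real.sqrt_nonneg _), hmaps hz⟩

theorem substitution_t_eq_y_add_zsq_nu_general {q : ℝ → ℝ} {g : ℝ × ℝ → E} {y ν : ℝ}
    (hq : ContinuousOn q (uIcc y (y + ν))) (hq_pos : ∀ t ∈ uIcc y (y + ν), 0 < ν * q t)
    (hg : ContinuousOn g (Ici 0 ×ˢ uIcc y (y + ν))) :
    IntervalIntegrable
      (fun t : ℝ => (2 * √((t - y) * q t))⁻¹ • g (√((t - y) * q t), t)) volume y (y + ν) ∧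
    IntervalIntegrable
      (fun z : ℝ =>
        (√(ν * q (y + z ^ 2 * ν)))⁻¹ • g (z * √(ν * q (y + z ^ 2 * ν)), y + z ^ 2 * ν))
      volume 0 1 ∧
    ∫ t in y..(y + ν), (2 * √((t - y) * q t))⁻¹ • g (√((t - y) * q t), t) =
      ν • ∫ z in (0 : ℝ)..1,
        (√(ν * q (y + z ^ 2 * ν)))⁻¹ • g (z * √(ν * q (y + z ^ 2 * ν)), y + z ^ 2 * ν) := by
  have hint := ContinuousOn.intervalIntegrable_of_Icc (μ := volume) zero_le_one
    (continuousOn_inv_sqrt_smul_comp_add_sq_mul hq hq_pos hg)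
  have heq := eqOn_smul_inv_sqrt_comp_add_sq_mul q g y ν
  refine ⟨?_, hint, ?_⟩
  · rw [← intervalIntegrable_smul_comp_add_sq_mul_iff, intervalIntegrable_congr heq]
    exact hint.smul ν
  · rw [← integral_smul_comp_add_sq_mul, ← intervalIntegral.integral_smul]
    exact intervalIntegral.integral_congr_ae (.of_forall heq)

end QuadraticSubstitution

theorem pos_on_Icc_of_sub_mul_pos {R : Type*} [Ring R] [LinearOrder R] [IsStrictOrderedRing R]
    {q : R → R} {a b : R} (hqa : 0 < q a) (hq : ∀ t ∈ Ioc a b, 0 < (t - a) * q t) :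
    ∀ t ∈ Icc a b, 0 < q t := by
  intro t ht
  rcases ht.1.eq_or_lt with rfl | hat
  · exact hqa
  · exact (mul_pos_iff_of_pos_left (sub_pos.2 hat)).1 (hq t ⟨hat, ht.2⟩)

section Cubic

variable {R : Type*} [CommRing R]

theorem sub_mul_cubic_cofactor (lam y t : R) :
    (t - y) * (t ^ 2 + t * y + y ^ 2 - lam) = t ^ 3 - lam * t - y ^ 3 + lam * y := by
  ring

theorem mul_cubic_cofactor_add_sq_mul (lam y ν z : R) :
    ν * ((y + z ^ 2 * ν) ^ 2 + (y + z ^ 2 * ν) * y + y ^ 2 - lam) =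
      z ^ 4 * ν ^ 3 + 3 * z ^ 2 * ν ^ 2 * y + 3 * ν * y ^ 2 - lam * ν := by
  ring

theorem cubic_cofactor_pos [LinearOrder R] [IsStrictOrderedRing R] {y lam m : R}
    (hconv : 3 * y ^ 2 - lam > 0)
    (hpos : ∀ t ∈ Ioc y m, t ^ 3 - lam * t - y ^ 3 + lam * y > 0) :
    ∀ t ∈ Icc y m, 0 < t ^ 2 + t * y + y ^ 2 - lam :=
  pos_on_Icc_of_sub_mul_pos (by linarith) fun t ht => by
    simpa only [sub_mul_cubic_cofactor] using hpos t ht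

end Cubic

/-- The substitution `t = y + z²ν` in the integral defining the time function: both
integrands are integrable and the two integrals agree (up to the factor `ν`). -/
theorem substitution_t_eq_y_add_zsq_nu (y lam ν m : ℝ)
    (hconv : 3 * y ^ 2 - lam > 0) (hν : 0 < ν) (hm : m = y + ν)
    (hpos : ∀ t ∈ Set.Ioc y m, t ^ 3 - lam * t - y ^ 3 + lam * y > 0)
    (g : ℝ × ℝ → ℝ) (hg : Continuous g) :
    IntervalIntegrable
      (fun t : ℝ =>
        g (Real.sqrt (t ^ 3 - lam * t - y ^ 3 + lam * y), t) /
          (2 * Real.sqrt (t ^ 3 - lam * t - y ^ 3 + lam * y)))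
      MeasureTheory.volume y m ∧
    IntervalIntegrable
      (fun z : ℝ =>
        g (z * Real.sqrt (z ^ 4 * ν ^ 3 + 3 * z ^ 2 * ν ^ 2 * y + 3 * ν * y ^ 2 - lam * ν),
            y + z ^ 2 * ν) /
          Real.sqrt (z ^ 4 * ν ^ 3 + 3 * z ^ 2 * ν ^ 2 * y + 3 * ν * y ^ 2 - lam * ν))
      MeasureTheory.volume 0 1 ∧
    (∫ t in y..m,
        g (Real.sqrt (t ^ 3 - lam * t - y ^ 3 + lam * y), t) /
          (2 * Real.sqrt (t ^ 3 - lam * t - y ^ 3 + lam * y))) =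
      ν * ∫ z in (0 : ℝ)..1,
        g (z * Real.sqrt (z ^ 4 * ν ^ 3 + 3 * z ^ 2 * ν ^ 2 * y + 3 * ν * y ^ 2 - lam * ν),
            y + z ^ 2 * ν) /
          Real.sqrt (z ^ 4 * ν ^ 3 + 3 * z ^ 2 * ν ^ 2 * y + 3 * ν * y ^ 2 - lam * ν) := by
  subst hm
  have hq_pos : ∀ t ∈ uIcc y (y + ν), 0 < ν * (t ^ 2 + t * y + y ^ 2 - lam) := by
    rw [uIcc_of_le (by linarith)]
    exact fun t ht => mul_pos hν (cubic_cofactor_pos hconv hpos t ht)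
  simpa only [sub_mul_cubic_cofactor, mul_cubic_cofactor_add_sq_mul, smul_eq_mul,
    ← div_eq_inv_mul] using
    substitution_t_eq_y_add_zsq_nu_general (by fun_prop) hq_pos hg.continuousOn
end

section
/- Let λ > 0 and h ∈ ℝ satisfy 27h² < 4λ³, and let C = {(x,y) ∈ ℝ² : x² − y³ + λy = h}. Then there exist nonempty disjoint sets K, B ⊆ ℝ² with C = K ∪ B such that K and B are each connected, each is open (and closed) in C, K is compact, and B is unbounded. In particular, C has exactly two connected components, exactly one of which is compact. -/
open Set

/-!
Solved for `x`, the curve is `x² = g(y)` with `g(y) = y³ - λy + h`. The discriminant condition says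
that `g` is positive at its local maximum `-√(λ/3)` and negative at its local minimum `√(λ/3)`, so
`g` has three real roots `a < b < c` and is nonnegative exactly on `[a, b] ∪ [c, ∞)`. Over each of
these intervals the curve is made of the two graphs `x = ±√(g(y))`, glued together where `g`
vanishes, hence is connected. The two pieces are closed and disjoint, so they are the components.
-/

section Topology

variable {X : Type*} [TopologicalSpace X] {C K B : Set X}

theorem isClopen_val_of_isClosed_union (hK : IsClosed K) (hB : IsClosed B)
    (hdisj : Disjoint K B) :
    IsClopen {q : ↥(K ∪ B) | (q : X) ∈ K} ∧ IsClopen {q : ↥(K ∪ B) | (q : X) ∈ B} := by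
  have hcompl : {q : ↥(K ∪ B) | (q : X) ∈ B}ᶜ = {q : ↥(K ∪ B) | (q : X) ∈ K} := by
    ext q
    exact ⟨q.2.resolve_right, fun hqK ↦ hdisj.notMem_of_mem_left hqK⟩
  have hclosedK := hK.preimage (continuous_subtype_val (p := (· ∈ K ∪ B)))
  have hclosedB := hB.preimage (continuous_subtype_val (p := (· ∈ K ∪ B)))
  have hclopenK : IsClopen {q : ↥(K ∪ B) | (q : X) ∈ K} :=
    ⟨hclosedK, hcompl ▸ hclosedB.isOpen_compl⟩
  exact ⟨hclopenK, isClopen_compl_iff.1 (hcompl ▸ hclopenK)⟩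

theorem connectedComponentIn_eq_of_isClopen_val (hK : IsPreconnected K) (hKC : K ⊆ C)
    (hclopen : IsClopen {q : C | (q : X) ∈ K}) {p : X} (hp : p ∈ K) :
    connectedComponentIn C p = K := by
  refine Subset.antisymm ?_ (hK.subset_connectedComponentIn hp hKC)
  rw [connectedComponentIn_eq_image (hKC hp), image_subset_iff]
  exact hclopen.connectedComponent_subset hp

end Topology

section SqrtGraph

variable {Y : Type*} {g : Y → ℝ} {S T : Set Y}

/-- The graph over `S` of the two-valued function `y ↦ ±√(g y)`, that is, the part over `S` of the
curve `x² = g(y)`. Unlike in `Set.graphOn`, the value `x` is the first coordinate. -/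
def sqrtGraph (g : Y → ℝ) (S : Set Y) : Set (ℝ × Y) :=
  {p | p.1 ^ 2 = g p.2 ∧ p.2 ∈ S}

theorem ofPred_sq_eq_eq_sqrtGraph_union (hg : ∀ y, 0 ≤ g y ↔ y ∈ S ∪ T) :
    {p : ℝ × Y | p.1 ^ 2 = g p.2} = sqrtGraph g S ∪ sqrtGraph g T := by
  ext p
  constructor
  · intro hp
    have hmem : p.2 ∈ S ∪ T := (hg p.2).1 ((sq_nonneg p.1).trans_eq hp)
    exact hmem.imp (And.intro hp) (And.intro hp)
  · rintro (hp | hp) <;> exact hp.1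

theorem disjoint_sqrtGraph (hST : Disjoint S T) : Disjoint (sqrtGraph g S) (sqrtGraph g T) :=
  (hST.preimage Prod.snd).mono (fun _ ↦ And.right) (fun _ ↦ And.right)

theorem sqrtGraph_eq_image_union_image (hg : ∀ y ∈ S, 0 ≤ g y) :
    sqrtGraph g S = (fun y ↦ (√(g y), y)) '' S ∪ (fun y ↦ (-√(g y), y)) '' S := by
  ext ⟨x, y⟩
  simp only [sqrtGraph, mem_ofPred_eq, mem_union, mem_image, Prod.mk.injEq]
  constructor
  · rintro ⟨hxy, hy⟩
    have habs : √(g y) = |x| := by rw [← hxy, Real.sqrt_sq_eq_abs]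
    rcases abs_choice x with hx | hx
    · exact .inl ⟨y, hy, by rw [habs, hx], rfl⟩
    · exact .inr ⟨y, hy, by rw [habs, hx, neg_neg], rfl⟩
  · rintro (⟨y, hy, rfl, rfl⟩ | ⟨y, hy, rfl, rfl⟩)
    · exact ⟨Real.sq_sqrt (hg y hy), hy⟩
    · exact ⟨by rw [neg_sq, Real.sq_sqrt (hg y hy)], hy⟩

theorem snd_image_sqrtGraph (hg : ∀ y ∈ S, 0 ≤ g y) : Prod.snd '' sqrtGraph g S = S := by
  refine Subset.antisymm (image_subset_iff.2 fun _ ↦ And.right) fun y hy ↦ ?_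
  exact ⟨(√(g y), y), ⟨Real.sq_sqrt (hg y hy), hy⟩, rfl⟩

theorem not_isBounded_sqrtGraph [Bornology Y] (hg : ∀ y ∈ S, 0 ≤ g y)
    (hS : ¬ Bornology.IsBounded S) : ¬ Bornology.IsBounded (sqrtGraph g S) := fun hb ↦
  hS (snd_image_sqrtGraph hg ▸ hb.image_snd)

variable [TopologicalSpace Y]

theorem isClosed_sqrtGraph (hg : ContinuousOn g S) (hS : IsClosed S) :
    IsClosed (sqrtGraph g S) := by
  have hcont : ContinuousOn (fun p : ℝ × Y ↦ p.1 ^ 2 - g p.2) (Prod.snd ⁻¹' S) :=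
    (continuous_fst.pow 2).continuousOn.sub
      (hg.comp continuous_snd.continuousOn (mapsTo_preimage _ _))
  have hpreimage : sqrtGraph g S =
      Prod.snd ⁻¹' S ∩ (fun p : ℝ × Y ↦ p.1 ^ 2 - g p.2) ⁻¹' {0} := by
    ext p
    exact and_comm.trans (and_congr_right' sub_eq_zero.symm)
  rw [hpreimage]
  exact hcont.preimage_isClosed_of_isClosed (hS.preimage continuous_snd) isClosed_singleton

theorem isCompact_sqrtGraph (hcont : ContinuousOn g S) (hg : ∀ y ∈ S, 0 ≤ g y)
    (hS : IsCompact S) : IsCompact (sqrtGraph g S) := by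
  rw [sqrtGraph_eq_image_union_image hg]
  exact (hS.image_of_continuousOn (hcont.sqrt.prodMk continuousOn_id)).union
    (hS.image_of_continuousOn (hcont.sqrt.neg.prodMk continuousOn_id))

theorem isConnected_sqrtGraph (hcont : ContinuousOn g S) (hg : ∀ y ∈ S, 0 ≤ g y)
    (hS : IsPreconnected S) (hzero : ∃ a ∈ S, g a = 0) : IsConnected (sqrtGraph g S) := by
  obtain ⟨a, haS, ha⟩ := hzero
  have hconn : IsConnected S := ⟨⟨a, haS⟩, hS⟩
  rw [sqrtGraph_eq_image_union_image hg]
  refine IsConnected.union ⟨(0, a), ⟨a, haS, ?_⟩, ⟨a, haS, ?_⟩⟩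
    (hconn.image _ (hcont.sqrt.prodMk continuousOn_id))
    (hconn.image _ (hcont.sqrt.neg.prodMk continuousOn_id))
  · simp [ha]
  · simp [ha]

end SqrtGraph

section Cubic

theorem depressedCubic_eq_mul_of_roots {R : Type*} [CommRing R] [IsDomain R] {p q a b c : R}
    (hab : a ≠ b) (hac : a ≠ c) (hbc : b ≠ c) (ha : a ^ 3 + p * a + q = 0)
    (hb : b ^ 3 + p * b + q = 0) (hc : c ^ 3 + p * c + q = 0) (y : R) :
    y ^ 3 + p * y + q = (y - a) * (y - b) * (y - c) := by
  have hquadb : a ^ 2 + a * b + b ^ 2 + p = 0 :=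
    mul_left_cancel₀ (sub_ne_zero.2 hab) (by linear_combination ha - hb)
  have hquadc : a ^ 2 + a * c + c ^ 2 + p = 0 :=
    mul_left_cancel₀ (sub_ne_zero.2 hac) (by linear_combination ha - hc)
  have hsum : a + b + c = 0 :=
    mul_left_cancel₀ (sub_ne_zero.2 hbc) (by linear_combination hquadb - hquadc)
  linear_combination ha + (y - a) * hquadb + (y - a) * (y - b) * hsum

theorem mul_sub_nonneg_iff_mem_Icc_union_Ici {R : Type*} [CommRing R] [LinearOrder R]
    [IsStrictOrderedRing R] {a b c : R} (hab : a ≤ b) (hbc : b ≤ c) (y : R) :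
    0 ≤ (y - a) * (y - b) * (y - c) ↔ y ∈ Icc a b ∪ Ici c := by
  rcases le_or_gt c y with hcy | hyc
  · have hby : b ≤ y := hbc.trans hcy
    exact iff_of_true (mul_nonneg (mul_nonneg (sub_nonneg.2 (hab.trans hby)) (sub_nonneg.2 hby))
      (sub_nonneg.2 hcy)) (.inr hcy)
  · calc 0 ≤ (y - a) * (y - b) * (y - c)
        ↔ (y - a) * (y - b) ≤ 0 := by
          rw [← neg_mul_neg, neg_sub, mul_nonneg_iff_of_pos_right (sub_pos.2 hyc), neg_nonneg]
      _ ↔ y ∈ Icc a b := sub_mul_sub_nonpos_iff y hab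
      _ ↔ y ∈ Icc a b ∪ Ici c := (or_iff_left hyc.not_ge).symm

theorem exists_roots_cubic_of_abs_lt {s h : ℝ} (hh : |h| < 2 * s ^ 3) :
    ∃ a b c : ℝ, a < b ∧ b < c ∧
      ∀ y, y ^ 3 - 3 * s ^ 2 * y + h = (y - a) * (y - b) * (y - c) := by
  have hs : 0 < s := (Odd.pow_pos_iff (by decide : Odd 3)).1 (by linarith [abs_nonneg h])
  obtain ⟨hlower, hupper⟩ := abs_lt.1 hh
  set g : ℝ → ℝ := fun y ↦ y ^ 3 + -(3 * s ^ 2) * y + h with hg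
  have hcont : Continuous g := by fun_prop
  have hleft : g (-(2 * s)) < 0 := by simp only [hg]; linarith
  have hmax : 0 < g (-s) := by simp only [hg]; linarith
  have hmin : g s < 0 := by simp only [hg]; linarith
  have hright : 0 < g (2 * s) := by simp only [hg]; linarith
  obtain ⟨a, ⟨-, has⟩, ha⟩ :=
    intermediate_value_Ioo (by linarith) hcont.continuousOn ⟨hleft, hmax⟩
  obtain ⟨b, ⟨hsb, hbs⟩, hb⟩ :=
    intermediate_value_Ioo' (by linarith) hcont.continuousOn ⟨hmin, hmax⟩
  obtain ⟨c, ⟨hsc, -⟩, hc⟩ :=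
    intermediate_value_Ioo (by linarith) hcont.continuousOn ⟨hmin, hright⟩
  have hab : a < b := has.trans hsb
  have hbc : b < c := hbs.trans hsc
  refine ⟨a, b, c, hab, hbc, fun y ↦ ?_⟩
  rw [← depressedCubic_eq_mul_of_roots hab.ne (hab.trans hbc).ne hbc.ne ha hb hc]
  ring

theorem exists_roots_depressedCubic {lam h : ℝ} (hh : 27 * h ^ 2 < 4 * lam ^ 3) :
    ∃ a b c : ℝ, a < b ∧ b < c ∧ ∀ y, y ^ 3 - lam * y + h = (y - a) * (y - b) * (y - c) := by
  have hlam : 0 < lam := (Odd.pow_pos_iff (by decide : Odd 3)).1 (by linarith [sq_nonneg h])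
  obtain ⟨s, hs, rfl⟩ : ∃ s : ℝ, 0 ≤ s ∧ lam = 3 * s ^ 2 :=
    ⟨√(lam / 3), Real.sqrt_nonneg _, by rw [Real.sq_sqrt (by positivity)]; ring⟩
  exact exists_roots_cubic_of_abs_lt (abs_lt_of_sq_lt_sq (by linarith) (by positivity))

end Cubic

/-- For `λ > 0` and `27h² < 4λ³`, the level curve `C = {x² − y³ + λy = h}` splits into
exactly two connected components: a compact oval `K` and an unbounded branch `B`,
each clopen in `C`. -/
theorem level_curve_swallowtail_two_components (lam h : ℝ) (hlam : 0 < lam)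
    (hh : 27 * h ^ 2 < 4 * lam ^ 3) (C : Set (ℝ × ℝ))
    (hC : C = {p : ℝ × ℝ | p.1 ^ 2 - p.2 ^ 3 + lam * p.2 = h}) :
    ∃ K B : Set (ℝ × ℝ),
      K.Nonempty ∧ B.Nonempty ∧ Disjoint K B ∧ C = K ∪ B ∧
      IsConnected K ∧ IsConnected B ∧
      IsClopen {q : C | (q : ℝ × ℝ) ∈ K} ∧ IsClopen {q : C | (q : ℝ × ℝ) ∈ B} ∧
      IsCompact K ∧ ¬ Bornology.IsBounded B ∧
      (∀ p ∈ C, connectedComponentIn C p = K ∨ connectedComponentIn C p = B) := by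
  obtain ⟨a, b, c, hab, hbc, hroots⟩ := exists_roots_depressedCubic hh
  set g : ℝ → ℝ := fun y ↦ (y - a) * (y - b) * (y - c) with hg
  have hcont {S : Set ℝ} : ContinuousOn g S := by fun_prop
  have hsign (y : ℝ) : 0 ≤ g y ↔ y ∈ Icc a b ∪ Ici c :=
    mul_sub_nonneg_iff_mem_Icc_union_Ici hab.le hbc.le y
  have hoval : ∀ y ∈ Icc a b, 0 ≤ g y := fun y hy ↦ (hsign y).2 (.inl hy)
  have hbranch : ∀ y ∈ Ici c, 0 ≤ g y := fun y hy ↦ (hsign y).2 (.inr hy)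
  obtain rfl : C = sqrtGraph g (Icc a b) ∪ sqrtGraph g (Ici c) := by
    rw [hC, ← ofPred_sq_eq_eq_sqrtGraph_union hsign]
    ext p
    constructor <;> intro hp <;> simp only [mem_ofPred_eq, hg, ← hroots] at hp ⊢ <;> linarith
  have hdisj : Disjoint (sqrtGraph g (Icc a b)) (sqrtGraph g (Ici c)) :=
    disjoint_sqrtGraph (disjoint_left.2 fun y hy hcy ↦ (hy.2.trans_lt hbc).not_ge hcy)
  have hK : IsConnected (sqrtGraph g (Icc a b)) :=
    isConnected_sqrtGraph hcont hoval isPreconnected_Icc ⟨a, left_mem_Icc.2 hab.le, by simp [hg]⟩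
  have hB : IsConnected (sqrtGraph g (Ici c)) :=
    isConnected_sqrtGraph hcont hbranch isPreconnected_Ici ⟨c, self_mem_Ici, by simp [hg]⟩
  obtain ⟨hKclopen, hBclopen⟩ := isClopen_val_of_isClosed_union
    (isClosed_sqrtGraph hcont isClosed_Icc) (isClosed_sqrtGraph hcont isClosed_Ici) hdisj
  exact ⟨_, _, hK.nonempty, hB.nonempty, hdisj, rfl, hK, hB, hKclopen, hBclopen,
    isCompact_sqrtGraph hcont hoval isCompact_Icc,
    not_isBounded_sqrtGraph hbranch (not_bddAbove_Ici c ·.bddAbove),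
    fun p hp ↦ hp.imp
      (connectedComponentIn_eq_of_isClopen_val hK.2 subset_union_left hKclopen)
      (connectedComponentIn_eq_of_isClopen_val hB.2 subset_union_right hBclopen)⟩
end

section
/- Let λ ≤ 0 and h ∈ ℝ, and let C = {(x,y) ∈ ℝ² : x² − y³ + λy = h}. Then C is nonempty, connected, and unbounded. -/
/-!
The equation of the curve reads `y³ - λy = x² - h`. For `λ ≤ 0` the left-hand side is an increasing
continuous bijection of `ℝ` in `y`, so the curve is the graph of a continuous function of `x ∈ ℝ`:
it is connected, and unbounded because it projects onto the whole `x`-axis.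
-/

open Filter Set

section Graph

variable {α β : Type*}

lemma isConnected_graphOn [TopologicalSpace α] [TopologicalSpace β] {s : Set α} {f : α → β}
    (hs : IsConnected s) (hf : ContinuousOn f s) : IsConnected (s.graphOn f) :=
  hs.image _ (continuousOn_id.prodMk hf)

lemma isBounded_of_isBounded_graphOn [Bornology α] [Bornology β] {s : Set α} {f : α → β}
    (h : Bornology.IsBounded (s.graphOn f)) : Bornology.IsBounded s :=
  image_fst_graphOn f s ▸ h.image_fst

lemma exists_continuous_setOf_eq_graphOn_univ {γ : Type*} [TopologicalSpace α]
    [LinearOrder β] [TopologicalSpace β] [OrderTopology β]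
    [PartialOrder γ] [TopologicalSpace γ] [OrderTopology γ] {f : α → γ} {g : β → γ}
    (hf : Continuous f) (hg : StrictMono g) (hg' : Function.Surjective g) :
    ∃ φ : α → β, Continuous φ ∧ {p : α × β | g p.2 = f p.1} = univ.graphOn φ := by
  let e : β ≃o γ := hg.orderIsoOfSurjective g hg'
  refine ⟨e.symm ∘ f, e.symm.continuous.comp hf, ?_⟩
  ext p
  calc g p.2 = f p.1 ↔ f p.1 = e p.2 := eq_comm
    _ ↔ e.symm (f p.1) = p.2 := e.symm_apply_eq.symm
    _ ↔ p ∈ univ.graphOn (e.symm ∘ f) := by simp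

end Graph

lemma surjective_add_of_monotone {α G : Type*} [LinearOrder α] [TopologicalSpace α]
    [PreconnectedSpace α] [AddCommGroup G] [LinearOrder G] [IsOrderedAddMonoid G]
    [TopologicalSpace G] [OrderClosedTopology G] [ContinuousAdd G] {f g : α → G}
    (hf : Monotone f) (hf_cont : Continuous f) (hf_surj : Function.Surjective f)
    (hg : Monotone g) (hg_cont : Continuous g) : Function.Surjective (fun x ↦ f x + g x) := by
  intro c
  obtain ⟨x, -⟩ := hf_surj c
  -- If `f y = c - g x`, then `c = f y + g x` lies between the values of `f + g` at `x` and `y`.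
  obtain ⟨y, hy⟩ := hf_surj (c - g x)
  obtain rfl : f y + g x = c := by rw [hy, sub_add_cancel]
  have h_cont : Continuous (fun z ↦ f z + g z) := hf_cont.add hg_cont
  rcases le_total x y with hxy | hyx
  · exact intermediate_value_univ x y h_cont
      ⟨add_le_add_left (hf hxy) (g x), add_le_add_right (hg hxy) (f y)⟩
  · exact intermediate_value_univ y x h_cont
      ⟨add_le_add_right (hg hyx) (f y), add_le_add_left (hf hyx) (g x)⟩

section OddPower

variable {n : ℕ} {a : ℝ}

lemma surjective_odd_pow (hn : Odd n) : Function.Surjective (fun y : ℝ ↦ y ^ n) := by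
  have h_top : Tendsto (fun y : ℝ ↦ y ^ n) atTop atTop := tendsto_pow_atTop hn.pos.ne'
  have h_bot : Tendsto (fun y : ℝ ↦ -(-y) ^ n) atBot atBot :=
    tendsto_neg_atTop_atBot.comp (h_top.comp tendsto_neg_atBot_atTop)
  simp only [hn.neg_pow, neg_neg] at h_bot
  exact (continuous_pow n).surjective h_top h_bot

lemma strictMono_odd_pow_add_mul (hn : Odd n) (ha : 0 ≤ a) :
    StrictMono (fun y : ℝ ↦ y ^ n + a * y) :=
  hn.strictMono_pow.add_monotone (monotone_mul_left_of_nonneg ha)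

lemma surjective_odd_pow_add_mul (hn : Odd n) (ha : 0 ≤ a) :
    Function.Surjective (fun y : ℝ ↦ y ^ n + a * y) :=
  surjective_add_of_monotone hn.strictMono_pow.monotone (continuous_pow n) (surjective_odd_pow hn)
    (monotone_mul_left_of_nonneg ha) (continuous_const_mul a)

end OddPower

/-- For `λ ≤ 0`, every level curve `{x² − y³ + λy = h}` of the standard parabolic
Hamiltonian is nonempty, connected and unbounded. -/
theorem level_curve_lambda_nonpos (lam h : ℝ) (hlam : lam ≤ 0) :
    ({p : ℝ × ℝ | p.1 ^ 2 - p.2 ^ 3 + lam * p.2 = h}).Nonempty ∧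
    IsConnected {p : ℝ × ℝ | p.1 ^ 2 - p.2 ^ 3 + lam * p.2 = h} ∧
    ¬ Bornology.IsBounded {p : ℝ × ℝ | p.1 ^ 2 - p.2 ^ 3 + lam * p.2 = h} := by
  have h_odd : Odd 3 := by decide
  have h_neg : 0 ≤ -lam := neg_nonneg.mpr hlam
  obtain ⟨φ, hφ, h_graph⟩ := exists_continuous_setOf_eq_graphOn_univ
    (f := fun x : ℝ ↦ x ^ 2 - h) (by fun_prop)
    (strictMono_odd_pow_add_mul h_odd h_neg) (surjective_odd_pow_add_mul h_odd h_neg)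
  have h_curve : {p : ℝ × ℝ | p.1 ^ 2 - p.2 ^ 3 + lam * p.2 = h} = univ.graphOn φ := by
    rw [← h_graph]
    ext p
    simp only [mem_ofPred_eq]
    constructor <;> intro hp <;> linarith
  have h_conn : IsConnected (univ.graphOn φ) := isConnected_graphOn isConnected_univ hφ.continuousOn
  rw [h_curve]
  exact ⟨h_conn.nonempty, h_conn,
    fun h_bdd ↦ NormedSpace.unbounded_univ ℝ ℝ (isBounded_of_isBounded_graphOn h_bdd)⟩
end

section
/- Let λ > 0 and h ∈ ℝ satisfy 27h² > 4λ³, and let C = {(x,y) ∈ ℝ² : x² − y³ + λy = h}. Then C is nonempty, connected, and unbounded. -/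
/-!
Solving for `x²` presents the curve as `x² = f(y)` with `f(y) = y³ - λy + h`, so it is two copies of
`{f ≥ 0}`, the graphs of `±√f`, glued along the zeros of `f`. If `r` is a root of a cubic `f`, then
`disc f = disc (f / (y - r)) · f'(r)²`. Here `disc f = 4λ³ - 27h²` is negative, so the quadratic
cofactor has no real root, and `{f ≥ 0}` is the ray `[r, ∞)`. The two rays are glued at `y = r`.
-/

open Filter Polynomial Set

section DoubleCover

variable {Y : Type*} {f : Y → ℝ}

/-- The curve `x² = f y`, as a subset of `ℝ × Y`: the double cover of `{y | 0 ≤ f y}` by the second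
projection, branched along the zeros of `f`. -/
def doubleCover (f : Y → ℝ) : Set (ℝ × Y) :=
  {p | p.1 ^ 2 = f p.2}

theorem mem_doubleCover {p : ℝ × Y} : p ∈ doubleCover f ↔ p.1 ^ 2 = f p.2 :=
  .rfl

theorem sqrt_mem_doubleCover {y : Y} (hy : 0 ≤ f y) : (√(f y), y) ∈ doubleCover f :=
  Real.sq_sqrt hy

theorem neg_sqrt_mem_doubleCover {y : Y} (hy : 0 ≤ f y) : (-√(f y), y) ∈ doubleCover f :=
  (neg_sq _).trans (Real.sq_sqrt hy)

theorem nonneg_of_mem_doubleCover {p : ℝ × Y} (hp : p ∈ doubleCover f) : 0 ≤ f p.2 :=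
  (sq_nonneg p.1).trans_eq hp

theorem doubleCover_eq_union_image_sqrt (f : Y → ℝ) :
    doubleCover f =
      (fun y ↦ (√(f y), y)) '' {y | 0 ≤ f y} ∪ (fun y ↦ (-√(f y), y)) '' {y | 0 ≤ f y} := by
  apply Subset.antisymm
  · rintro ⟨x, y⟩ hp
    have hy : 0 ≤ f y := nonneg_of_mem_doubleCover hp
    have hsqrt : √(f y) = |x| := by rw [← Real.sqrt_sq_eq_abs, mem_doubleCover.mp hp]
    rcases le_total 0 x with hx | hx
    · exact .inl ⟨y, hy, by simp only [hsqrt, abs_of_nonneg hx]⟩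
    · exact .inr ⟨y, hy, by simp only [hsqrt, abs_of_nonpos hx, neg_neg]⟩
  · rintro _ (⟨y, hy, rfl⟩ | ⟨y, hy, rfl⟩)
    · exact sqrt_mem_doubleCover hy
    · exact neg_sqrt_mem_doubleCover hy

theorem image_snd_doubleCover (f : Y → ℝ) : Prod.snd '' doubleCover f = {y | 0 ≤ f y} := by
  apply Subset.antisymm
  · rintro _ ⟨p, hp, rfl⟩
    exact nonneg_of_mem_doubleCover hp
  · exact fun y hy ↦ ⟨_, sqrt_mem_doubleCover hy, rfl⟩

theorem isConnected_doubleCover [TopologicalSpace Y] (hf : ContinuousOn f {y | 0 ≤ f y})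
    (hpos : IsPreconnected {y | 0 ≤ f y}) (hzero : ∃ y, f y = 0) :
    IsConnected (doubleCover f) := by
  obtain ⟨r, hr⟩ := hzero
  have hr_mem : r ∈ {y | 0 ≤ f y} := hr.ge
  have hconn : IsConnected {y | 0 ≤ f y} := ⟨⟨r, hr_mem⟩, hpos⟩
  have hbranch : ((0 : ℝ), r) ∈
      (fun y ↦ (√(f y), y)) '' {y | 0 ≤ f y} ∩ (fun y ↦ (-√(f y), y)) '' {y | 0 ≤ f y} :=
    ⟨⟨r, hr_mem, by simp [hr]⟩, ⟨r, hr_mem, by simp [hr]⟩⟩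
  rw [doubleCover_eq_union_image_sqrt]
  exact .union ⟨_, hbranch⟩ (hconn.image _ (hf.sqrt.prodMk continuousOn_id))
    (hconn.image _ (hf.sqrt.neg.prodMk continuousOn_id))

theorem not_isBounded_doubleCover [Bornology Y] (hf : ¬ Bornology.IsBounded {y | 0 ≤ f y}) :
    ¬ Bornology.IsBounded (doubleCover f) :=
  fun hbdd ↦ hf (image_snd_doubleCover f ▸ hbdd.image_snd)

end DoubleCover

section OddDegree

variable {P : ℝ[X]}

theorem tendsto_eval_atBot_of_odd_natDegree (hdeg : Odd P.natDegree) (hlc : 0 ≤ P.leadingCoeff) :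
    Tendsto P.eval atBot atBot := by
  have hdeg_comp : 0 < (P.comp (-X)).degree := by
    rw [← natDegree_pos_iff_degree_pos, natDegree_comp, natDegree_neg, natDegree_X, mul_one]
    exact hdeg.pos
  have hlc_comp : (P.comp (-X)).leadingCoeff ≤ 0 := by
    simpa [hdeg.neg_one_pow] using hlc
  have hreflect := tendsto_atBot_of_leadingCoeff_nonpos _ hdeg_comp hlc_comp
  simpa [Function.comp_def] using hreflect.comp tendsto_neg_atBot_atTop

theorem exists_isRoot_of_odd_natDegree (hdeg : Odd P.natDegree) : ∃ r, P.IsRoot r := by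
  wlog hlc : 0 ≤ P.leadingCoeff generalizing P
  · have hneg : 0 ≤ (-P).leadingCoeff := by
      rw [leadingCoeff_neg]
      linarith
    simpa [IsRoot] using this ((natDegree_neg P).symm ▸ hdeg) hneg
  · have htop : Tendsto P.eval atTop atTop :=
      P.tendsto_atTop_of_leadingCoeff_nonneg (natDegree_pos_iff_degree_pos.mp hdeg.pos) hlc
    exact P.continuous.surjective htop (tendsto_eval_atBot_of_odd_natDegree hdeg hlc) 0

end OddDegree

section Cubic

theorem cubic_eval_toPoly {R : Type*} [Semiring R] (P : Cubic R) (y : R) :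
    P.toPoly.eval y = P.a * y ^ 3 + P.b * y ^ 2 + P.c * y + P.d := by
  simp [Cubic.toPoly]

section Root

variable {R : Type*} [CommRing R] {P : Cubic R} {r : R}

theorem cubic_eval_eq_sub_mul_of_isRoot (hr : P.toPoly.IsRoot r) (y : R) :
    P.toPoly.eval y =
      (y - r) * (P.a * (y * y) + (P.b + P.a * r) * y + (P.c + P.b * r + P.a * r ^ 2)) := by
  rw [IsRoot, cubic_eval_toPoly] at hr
  rw [cubic_eval_toPoly]
  linear_combination hr

theorem cubic_discr_eq_discrim_mul_sq_of_isRoot (hr : P.toPoly.IsRoot r) :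
    P.discr = discrim P.a (P.b + P.a * r) (P.c + P.b * r + P.a * r ^ 2) *
      P.toPoly.derivative.eval r ^ 2 := by
  have hderiv : P.toPoly.derivative.eval r = 3 * P.a * r ^ 2 + 2 * P.b * r + P.c := by
    simp only [Cubic.toPoly, derivative_add, derivative_C_mul, derivative_C, derivative_X_pow,
      derivative_X, eval_add, eval_mul, eval_C, eval_pow, eval_X, eval_one, eval_zero,
      Nat.cast_ofNat, Nat.add_one_sub_one]
    ring
  rw [IsRoot, cubic_eval_toPoly] at hr
  have hd : P.d = -(P.a * r ^ 3 + P.b * r ^ 2 + P.c * r) := by linear_combination hr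
  rw [Cubic.discr, discrim, hderiv, hd]
  ring

end Root

section Ordered

variable {R : Type*} [CommRing R] [LinearOrder R] [IsStrictOrderedRing R]

theorem quadratic_pos_of_discrim_neg {a b c : R} (ha : 0 < a) (hdisc : discrim a b c < 0) (y : R) :
    0 < a * (y * y) + b * y + c := by
  have hsquare : 4 * a * (a * (y * y) + b * y + c) = (2 * a * y + b) ^ 2 - discrim a b c := by
    rw [discrim]
    ring
  have hpos : 0 < 4 * a * (a * (y * y) + b * y + c) := by
    rw [hsquare]
    exact sub_pos.mpr (hdisc.trans_le (sq_nonneg _))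
  exact pos_of_mul_pos_right hpos (by positivity)

theorem cubic_eval_nonneg_iff_of_discr_neg {P : Cubic R} {r : R} (ha : 0 < P.a)
    (hdiscr : P.discr < 0) (hr : P.toPoly.IsRoot r) (y : R) : 0 ≤ P.toPoly.eval y ↔ r ≤ y := by
  rw [cubic_discr_eq_discrim_mul_sq_of_isRoot hr] at hdiscr
  have hdisc := neg_of_mul_neg_left hdiscr (sq_nonneg _)
  rw [cubic_eval_eq_sub_mul_of_isRoot hr,
    mul_nonneg_iff_of_pos_right (quadratic_pos_of_discrim_neg ha hdisc y), sub_nonneg]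

end Ordered

theorem exists_isRoot_setOf_cubic_eval_nonneg_eq_Ici {P : Cubic ℝ} (ha : 0 < P.a)
    (hdiscr : P.discr < 0) :
    ∃ r, P.toPoly.IsRoot r ∧ {y | 0 ≤ P.toPoly.eval y} = Ici r := by
  have hodd : Odd P.toPoly.natDegree := by
    rw [Cubic.natDegree_of_a_ne_zero ha.ne']
    decide
  obtain ⟨r, hr⟩ := exists_isRoot_of_odd_natDegree hodd
  exact ⟨r, hr, ext (cubic_eval_nonneg_iff_of_discr_neg ha hdiscr hr)⟩

theorem isConnected_doubleCover_cubic {P : Cubic ℝ} (ha : 0 < P.a) (hdiscr : P.discr < 0) :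
    IsConnected (doubleCover P.toPoly.eval) := by
  obtain ⟨r, hr, hray⟩ := exists_isRoot_setOf_cubic_eval_nonneg_eq_Ici ha hdiscr
  exact isConnected_doubleCover P.toPoly.continuousOn (hray ▸ isPreconnected_Ici) ⟨r, hr⟩

theorem not_isBounded_doubleCover_cubic {P : Cubic ℝ} (ha : 0 < P.a) (hdiscr : P.discr < 0) :
    ¬ Bornology.IsBounded (doubleCover P.toPoly.eval) := by
  obtain ⟨r, -, hray⟩ := exists_isRoot_setOf_cubic_eval_nonneg_eq_Ici ha hdiscr
  refine not_isBounded_doubleCover fun hbdd ↦ not_bddAbove_Ici r ?_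
  exact hray ▸ hbdd.bddAbove

end Cubic

theorem setOf_level_eq_doubleCover (lam h : ℝ) :
    {p : ℝ × ℝ | p.1 ^ 2 - p.2 ^ 3 + lam * p.2 = h} =
      doubleCover (Cubic.toPoly ⟨1, 0, -lam, h⟩).eval := by
  ext ⟨x, y⟩
  rw [mem_doubleCover, cubic_eval_toPoly, mem_ofPred_eq]
  constructor <;> intro hp <;> linear_combination hp

theorem level_curve_outside_swallowtail_general (lam h : ℝ) (hh : 27 * h ^ 2 > 4 * lam ^ 3) :
    ({p : ℝ × ℝ | p.1 ^ 2 - p.2 ^ 3 + lam * p.2 = h}).Nonempty ∧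
    IsConnected {p : ℝ × ℝ | p.1 ^ 2 - p.2 ^ 3 + lam * p.2 = h} ∧
    ¬ Bornology.IsBounded {p : ℝ × ℝ | p.1 ^ 2 - p.2 ^ 3 + lam * p.2 = h} := by
  have hdiscr : Cubic.discr ⟨1, 0, -lam, h⟩ < 0 := by
    rw [Cubic.discr]
    linarith
  have hconn := isConnected_doubleCover_cubic one_pos hdiscr
  rw [setOf_level_eq_doubleCover]
  exact ⟨hconn.nonempty, hconn, not_isBounded_doubleCover_cubic one_pos hdiscr⟩

/-- For `λ > 0` and `27h² > 4λ³` (outside the swallow-tail region), the level curve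
`{x² − y³ + λy = h}` is nonempty, connected and unbounded. -/
theorem level_curve_outside_swallowtail (lam h : ℝ) (hlam : 0 < lam)
    (hh : 27 * h ^ 2 > 4 * lam ^ 3) :
    ({p : ℝ × ℝ | p.1 ^ 2 - p.2 ^ 3 + lam * p.2 = h}).Nonempty ∧
    IsConnected {p : ℝ × ℝ | p.1 ^ 2 - p.2 ^ 3 + lam * p.2 = h} ∧
    ¬ Bornology.IsBounded {p : ℝ × ℝ | p.1 ^ 2 - p.2 ^ 3 + lam * p.2 = h} :=
  level_curve_outside_swallowtail_general lam h hh
end
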